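/- arXiv:2404.19125 — 3 statements merged into one kernel-verified Lean document; each statement's English description precedes it below -/
import Mathlib

section
/- With the setup below, there exists a function h in the class 𝐡 on {(x,y) : y > y₀} such that for all z = x + iy with y > y₀, F(z) = p(y) + h(x,y), where p(y) := Q̃(exp(2iy·N)·a₀, conj a₀). Moreover, p is a polynomial function of y of degree at most d whose coefficient of y^d equals ((2i)^d / d!)·Q̃(N^d·a₀, conj a₀) = ((−2i)^d / d!)·Q̃(a₀, N^d·(conj a₀)); in particular, p has degree exactly d if and only if Q̃(a₀, N^d·(conj a₀)) ≠ 0. -/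
/-- Partial derivative in the first (`x`) variable. -/
noncomputable def pdX {E : Type*} [NormedAddCommGroup E] [NormedSpace ℝ E]
    (f : ℝ → ℝ → E) : ℝ → ℝ → E :=
  fun x y => deriv (fun x' => f x' y) x

/-- Partial derivative in the second (`y`) variable. -/
noncomputable def pdY {E : Type*} [NormedAddCommGroup E] [NormedSpace ℝ E]
    (f : ℝ → ℝ → E) : ℝ → ℝ → E :=
  fun x y => deriv (fun y' => f x y') y

/-- The class 𝐡 of smooth functions on `{(x,y) | y > y₀}` all of whose iterated partial
derivatives `∂_x^r ∂_y^s f` decay like `e^{-π y}` as `y → ∞`, uniformly in `x`. -/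
def InClassH {E : Type*} [NormedAddCommGroup E] [NormedSpace ℝ E]
    (y₀ : ℝ) (f : ℝ → ℝ → E) : Prop :=
  ContDiffOn ℝ (⊤ : ℕ∞) (fun q : ℝ × ℝ => f q.1 q.2) {q : ℝ × ℝ | y₀ < q.2} ∧
  ∀ r s : ℕ, ∃ C : ℝ, 0 < C ∧ ∃ Y : ℝ, y₀ < Y ∧ ∀ x y : ℝ, Y ≤ y →
    ‖(pdX^[r] (pdY^[s] f)) x y‖ ≤ C * Real.exp (-Real.pi * y)


section Aux
open Filter Topology

/-- The nome `q = exp(2πi(x+iy))`. -/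
noncomputable def qq (x y : ℝ) : ℂ :=
  Complex.exp (2 * Real.pi * Complex.I * ((x : ℂ) + (y : ℂ) * Complex.I))

/-- Finite sums of elementary decaying terms. -/
inductive TT (r y₀ : ℝ) : (ℝ → ℝ → ℂ) → Prop
  | basic (k : ℕ) (c : ℂ) (u v : ℂ → ℂ) (hu : AnalyticOnNhd ℂ u (Metric.ball 0 r))
      (hv : AnalyticOnNhd ℂ v (Metric.ball 0 r)) (h0 : u 0 * v 0 = 0) :
      TT r y₀ (fun x y => c * (y : ℂ) ^ k * (u (qq x y) * (starRingEnd ℂ) (v (qq x y))))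
  | add (f g : ℝ → ℝ → ℂ) (hf : TT r y₀ f) (hg : TT r y₀ g) : TT r y₀ (fun x y => f x y + g x y)
  | congr (f g : ℝ → ℝ → ℂ) (hf : TT r y₀ f) (h : ∀ x y, y₀ < y → g x y = f x y) : TT r y₀ g

lemma norm_qq (x y : ℝ) : ‖qq x y‖ = Real.exp (-(2 * Real.pi * y)) := by
  rw [qq, Complex.norm_exp]
  congr 1
  simp

lemma qq_mem {r y₀ : ℝ} (hr : 0 < r) (hy₀ : y₀ = max 0 (-(Real.log r) / (2 * Real.pi)))
    {x y : ℝ} (hy : y₀ < y) : qq x y ∈ Metric.ball (0 : ℂ) r := by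
  rw [mem_ball_zero_iff, norm_qq]
  have h1 : -(Real.log r) / (2 * Real.pi) < y := lt_of_le_of_lt (hy₀ ▸ le_max_right _ _) hy
  rw [div_lt_iff₀ (by positivity)] at h1
  rw [← Real.lt_log_iff_exp_lt hr]
  linarith

lemma qq_contDiff : ContDiff ℝ (⊤ : ℕ∞) (fun q : ℝ × ℝ => qq q.1 q.2) := by
  have h1 : ContDiff ℝ (⊤ : ℕ∞) (fun q : ℝ × ℝ => (q.1 : ℂ)) :=
    Complex.ofRealCLM.contDiff.comp contDiff_fst
  have h2 : ContDiff ℝ (⊤ : ℕ∞) (fun q : ℝ × ℝ => (q.2 : ℂ)) :=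
    Complex.ofRealCLM.contDiff.comp contDiff_snd
  unfold qq
  exact (contDiff_const.mul (h1.add (h2.mul contDiff_const))).cexp

lemma qq_derivX (x y : ℝ) :
    HasDerivAt (fun x' => qq x' y) (2 * Real.pi * Complex.I * qq x y) x := by
  have h1 : HasDerivAt (fun x' : ℝ => (x' : ℂ)) 1 x := Complex.ofRealCLM.hasDerivAt
  refine ((h1.add_const ((y : ℂ) * Complex.I)).const_mul (2 * Real.pi * Complex.I)).cexp.congr_deriv ?_
  unfold qq
  ring

lemma qq_derivY (x y : ℝ) :
    HasDerivAt (fun y' => qq x y') (-(2 * Real.pi) * qq x y) y := by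
  have h1 : HasDerivAt (fun x' : ℝ => (x' : ℂ)) 1 y := Complex.ofRealCLM.hasDerivAt
  refine (((h1.mul_const Complex.I).const_add (x : ℂ)).const_mul
    (2 * Real.pi * Complex.I)).cexp.congr_deriv ?_
  unfold qq
  linear_combination ((2 * Real.pi : ℂ) * Complex.exp (2 * Real.pi * Complex.I * ((x : ℂ) + (y : ℂ) * Complex.I))) * (Complex.I_sq)

lemma TT.contDiffOn {r y₀ : ℝ} (hr : 0 < r)
    (hy₀ : y₀ = max 0 (-(Real.log r) / (2 * Real.pi))) {f : ℝ → ℝ → ℂ} (hf : TT r y₀ f) :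
    ContDiffOn ℝ (⊤ : ℕ∞) (fun q : ℝ × ℝ => f q.1 q.2) {q : ℝ × ℝ | y₀ < q.2} := by
  induction hf with
  | basic k c u v hu hv h0 =>
    have key : ∀ w : ℂ → ℂ, AnalyticOnNhd ℂ w (Metric.ball 0 r) →
        ContDiffOn ℝ (⊤ : ℕ∞) (fun q : ℝ × ℝ => w (qq q.1 q.2)) {q : ℝ × ℝ | y₀ < q.2} := by
      intro w hw
      have h1 : ContDiffOn ℝ (⊤ : ℕ∞) w (Metric.ball 0 r) :=
        (hw.contDiffOn Metric.isOpen_ball.uniqueDiffOn).restrict_scalars ℝ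
      exact h1.comp qq_contDiff.contDiffOn (fun q hq => qq_mem hr hy₀ hq)
    have h2 : ContDiff ℝ (⊤ : ℕ∞) (fun q : ℝ × ℝ => (q.2 : ℂ)) :=
      Complex.ofRealCLM.contDiff.comp contDiff_snd
    have h3 : ContDiff ℝ (⊤ : ℕ∞) (fun z : ℂ => (starRingEnd ℂ) z) :=
      Complex.conjCLE.contDiff
    exact ((contDiff_const.mul (h2.pow k)).contDiffOn).mul
      ((key u hu).mul (h3.comp_contDiffOn (key v hv)))
  | add f g _ _ hf hg => exact hf.add hg
  | congr f g _ h hf => exact hf.congr (fun q hq => h _ _ hq)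

lemma TT.diffX {r y₀ : ℝ} (hr : 0 < r)
    (hy₀ : y₀ = max 0 (-(Real.log r) / (2 * Real.pi))) {f : ℝ → ℝ → ℂ} (hf : TT r y₀ f)
    {x y : ℝ} (hy : y₀ < y) : DifferentiableAt ℝ (fun x' => f x' y) x := by
  have ho : IsOpen {q : ℝ × ℝ | y₀ < q.2} := isOpen_lt continuous_const continuous_snd
  have h1 : DifferentiableAt ℝ (fun q : ℝ × ℝ => f q.1 q.2) (x, y) :=
    ((hf.contDiffOn hr hy₀).contDiffAt (ho.mem_nhds hy)).differentiableAt (by simp)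
  exact DifferentiableAt.comp (f := fun x' : ℝ => (x', y)) x h1
    (differentiableAt_id.prodMk (differentiableAt_const y))

lemma TT.diffY {r y₀ : ℝ} (hr : 0 < r)
    (hy₀ : y₀ = max 0 (-(Real.log r) / (2 * Real.pi))) {f : ℝ → ℝ → ℂ} (hf : TT r y₀ f)
    {x y : ℝ} (hy : y₀ < y) : DifferentiableAt ℝ (fun y' => f x y') y := by
  have ho : IsOpen {q : ℝ × ℝ | y₀ < q.2} := isOpen_lt continuous_const continuous_snd
  have h1 : DifferentiableAt ℝ (fun q : ℝ × ℝ => f q.1 q.2) (x, y) :=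
    ((hf.contDiffOn hr hy₀).contDiffAt (ho.mem_nhds hy)).differentiableAt (by simp)
  exact DifferentiableAt.comp (f := fun y' : ℝ => (x, y')) y h1
    ((differentiableAt_const x).prodMk differentiableAt_id)

lemma analytic_D {r : ℝ} {u : ℂ → ℂ} (hu : AnalyticOnNhd ℂ u (Metric.ball 0 r)) :
    AnalyticOnNhd ℂ (fun z => z * deriv u z) (Metric.ball 0 r) :=
  analyticOnNhd_id.mul hu.deriv

lemma TT.pdX_mem {r y₀ : ℝ} (hr : 0 < r)
    (hy₀ : y₀ = max 0 (-(Real.log r) / (2 * Real.pi))) {f : ℝ → ℝ → ℂ} (hf : TT r y₀ f) :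
    TT r y₀ (pdX f) := by
  induction hf with
  | basic k c u v hu hv h0 =>
    refine TT.congr _ _ (TT.add _ _
      (TT.basic k (c * (2 * Real.pi * Complex.I)) (fun z => z * deriv u z) v (analytic_D hu) hv
        (by simp))
      (TT.basic k (-c * (2 * Real.pi * Complex.I)) u (fun z => z * deriv v z) hu (analytic_D hv)
        (by simp))) ?_
    intro x y hy
    have hq := qq_mem (x := x) hr hy₀ hy
    have h1 := ((hu _ hq).differentiableAt.hasDerivAt).comp x (qq_derivX x y)
    have h2 := (((hv _ hq).differentiableAt.hasDerivAt).comp x (qq_derivX x y)).star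
    have h3 := ((h1.mul h2).const_mul (c * (y : ℂ) ^ k)).deriv
    refine Eq.trans h3 ?_
    simp
    ring
  | add f g hf' hg' hf hg =>
    refine TT.congr _ _ (TT.add _ _ hf hg) ?_
    intro x y hy
    exact deriv_fun_add (hf'.diffX hr hy₀ hy) (hg'.diffX hr hy₀ hy)
  | congr f g _ h hf =>
    refine TT.congr _ _ hf ?_
    intro x y hy
    have : (fun x' => g x' y) = (fun x' => f x' y) := by
      funext x'; exact h _ _ hy
    simp only [pdX, this]

lemma TT.pdY_mem {r y₀ : ℝ} (hr : 0 < r)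
    (hy₀ : y₀ = max 0 (-(Real.log r) / (2 * Real.pi))) {f : ℝ → ℝ → ℂ} (hf : TT r y₀ f) :
    TT r y₀ (pdY f) := by
  induction hf with
  | basic k c u v hu hv h0 =>
    refine TT.congr _ _ (TT.add _ _ (TT.basic (k - 1) (c * k) u v hu hv h0) (TT.add _ _
      (TT.basic k (-c * (2 * Real.pi)) (fun z => z * deriv u z) v (analytic_D hu) hv
        (by simp))
      (TT.basic k (-c * (2 * Real.pi)) u (fun z => z * deriv v z) hu (analytic_D hv)
        (by simp)))) ?_
    intro x y hy
    have hq := qq_mem (x := x) hr hy₀ hy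
    have h1 := ((hu _ hq).differentiableAt.hasDerivAt).comp y (qq_derivY x y)
    have h2 := (((hv _ hq).differentiableAt.hasDerivAt).comp y (qq_derivY x y)).star
    have h0 : HasDerivAt (fun x' : ℝ => (x' : ℂ)) 1 y := Complex.ofRealCLM.hasDerivAt
    have h3 := (((h0.pow k).const_mul c).mul (h1.mul h2)).deriv
    refine Eq.trans h3 ?_
    simp
    ring
  | add f g hf' hg' hf hg =>
    refine TT.congr _ _ (TT.add _ _ hf hg) ?_
    intro x y hy
    exact deriv_fun_add (hf'.diffY hr hy₀ hy) (hg'.diffY hr hy₀ hy)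
  | congr f g _ h hf =>
    refine TT.congr _ _ hf ?_
    intro x y hy
    refine Filter.EventuallyEq.deriv_eq ?_
    filter_upwards [lt_mem_nhds hy] with y' hy'
    exact h _ _ hy'

lemma TT.bound {r y₀ : ℝ} (hr : 0 < r)
    (hy₀ : y₀ = max 0 (-(Real.log r) / (2 * Real.pi))) {f : ℝ → ℝ → ℂ} (hf : TT r y₀ f) :
    ∃ C : ℝ, 0 < C ∧ ∀ᶠ y in atTop, ∀ x : ℝ, ‖f x y‖ ≤ C * Real.exp (-Real.pi * y) := by
  induction hf with
  | basic k c u v hu hv h0 =>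
    have hprod : (fun z => u z * (starRingEnd ℂ) (v z)) =O[𝓝 (0 : ℂ)] (fun z => z) := by
      have h0r : (0 : ℂ) ∈ Metric.ball (0 : ℂ) r := by simpa using hr
      have bd : ∀ w : ℂ → ℂ, AnalyticOnNhd ℂ w (Metric.ball 0 r) →
          w =O[𝓝 (0 : ℂ)] (fun _ => (1 : ℂ)) := fun w hw =>
        (hw 0 h0r).continuousAt.tendsto.isBigO_one ℂ
      have van : ∀ w : ℂ → ℂ, AnalyticOnNhd ℂ w (Metric.ball 0 r) → w 0 = 0 →
          w =O[𝓝 (0 : ℂ)] (fun z => z) := fun w hw h => by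
        simpa [h] using (hw 0 h0r).differentiableAt.isBigO_sub
      have cj : ∀ (w g : ℂ → ℂ), w =O[𝓝 (0 : ℂ)] g →
          (fun z => (starRingEnd ℂ) (w z)) =O[𝓝 (0 : ℂ)] g := fun w g h =>
        (Asymptotics.IsBigO.of_norm_left (by simpa using h.norm_left))
      rcases mul_eq_zero.mp h0 with h | h
      · simpa using (van u hu h).mul (cj _ _ (bd v hv))
      · simpa using (bd u hu).mul (cj _ _ (van v hv h))
    obtain ⟨C, hC, hb⟩ := hprod.exists_pos
    rw [Asymptotics.isBigOWith_iff, Metric.eventually_nhds_iff] at hb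
    obtain ⟨ε, hε, hb⟩ := hb
    have t1 : Tendsto (fun y : ℝ => Real.exp (-(2 * Real.pi * y))) atTop (𝓝 0) :=
      Real.tendsto_exp_neg_atTop_nhds_zero.comp
        (tendsto_id.const_mul_atTop (by positivity : 0 < 2 * Real.pi))
    have t2 : Tendsto (fun y : ℝ => y ^ k * Real.exp (-Real.pi * y)) atTop (𝓝 0) := by
      have := tendsto_rpow_mul_exp_neg_mul_atTop_nhds_zero (k : ℝ) Real.pi Real.pi_pos
      simpa using this
    refine ⟨(‖c‖ + 1) * C, by positivity, ?_⟩
    filter_upwards [t1.eventually (gt_mem_nhds hε), t2.eventually (gt_mem_nhds one_pos),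
      eventually_ge_atTop 0] with y h1 h2 h3 x
    have h4 := hb (y := qq x y) (by rwa [dist_zero_right, norm_qq])
    rw [norm_qq] at h4
    rw [norm_mul, norm_mul, norm_pow, Complex.norm_real, Real.norm_of_nonneg h3]
    have e : Real.exp (-(2 * Real.pi * y)) = Real.exp (-Real.pi * y) * Real.exp (-Real.pi * y) := by
      rw [← Real.exp_add]; ring_nf
    rw [e] at h4
    have hE := Real.exp_pos (-Real.pi * y)
    calc _ ≤ ‖c‖ * y ^ k * (C * (Real.exp (-Real.pi * y) * Real.exp (-Real.pi * y))) := by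
            gcongr
      _ = ‖c‖ * C * Real.exp (-Real.pi * y) * (y ^ k * Real.exp (-Real.pi * y)) := by ring
      _ ≤ ‖c‖ * C * Real.exp (-Real.pi * y) * 1 := by gcongr
      _ ≤ (‖c‖ + 1) * C * Real.exp (-Real.pi * y) := by rw [mul_one]; gcongr; linarith
  | add f g _ _ hf hg =>
    obtain ⟨C, hC, hf⟩ := hf
    obtain ⟨D, hD, hg⟩ := hg
    refine ⟨C + D, by positivity, ?_⟩
    filter_upwards [hf, hg] with y h1 h2 x
    rw [add_mul]
    exact (norm_add_le _ _).trans (add_le_add (h1 x) (h2 x))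
  | congr f g _ h hf =>
    obtain ⟨C, hC, hf⟩ := hf
    refine ⟨C, hC, ?_⟩
    filter_upwards [hf, eventually_gt_atTop y₀] with y h1 h2 x
    rw [h x y h2]; exact h1 x

lemma TT.inClassH {r y₀ : ℝ} (hr : 0 < r)
    (hy₀ : y₀ = max 0 (-(Real.log r) / (2 * Real.pi))) {f : ℝ → ℝ → ℂ} (hf : TT r y₀ f) :
    InClassH y₀ f := by
  refine ⟨hf.contDiffOn hr hy₀, fun k s => ?_⟩
  have h1 : TT r y₀ (pdY^[s] f) := by
    induction s with
    | zero => exact hf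
    | succ s ih => rw [Function.iterate_succ_apply']; exact ih.pdY_mem hr hy₀
  have h2 : TT r y₀ (pdX^[k] (pdY^[s] f)) := by
    induction k with
    | zero => exact h1
    | succ s ih => rw [Function.iterate_succ_apply']; exact ih.pdX_mem hr hy₀
  obtain ⟨C, hC, hb⟩ := h2.bound hr hy₀
  obtain ⟨Y, hY⟩ := eventually_atTop.mp hb
  refine ⟨C, hC, max Y (y₀ + 1), lt_of_lt_of_le (by linarith) (le_max_right _ _), ?_⟩
  intro x y hy
  exact hY y ((le_max_left _ _).trans hy) x

lemma TT.zero (r y₀ : ℝ) : TT r y₀ (fun _ _ => 0) :=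
  TT.congr _ _ (TT.basic 0 0 (fun _ => 0) (fun _ => 0) analyticOnNhd_const analyticOnNhd_const
    (by simp)) (by simp)

lemma TT.sum {r y₀ : ℝ} {ι : Type*} (s : Finset ι) (f : ι → ℝ → ℝ → ℂ)
    (h : ∀ i ∈ s, TT r y₀ (f i)) : TT r y₀ (fun x y => ∑ i ∈ s, f i x y) := by
  classical
  induction s using Finset.induction_on with
  | empty => simpa using TT.zero r y₀
  | insert i s hi ih =>
    refine TT.congr _ _ (TT.add _ _ (h i (by simp)) (ih fun j hj => h j (by simp [hj]))) ?_
    intro x y _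
    simp [Finset.sum_insert hi]

end Aux


section Alg

lemma nil_pow {m : ℕ} (N : Matrix (Fin m) (Fin m) ℂ) (h : IsNilpotent N) : N ^ m = 0 := by
  have h1 := (Matrix.isNilpotent_charpoly_sub_pow_of_isNilpotent h).eq_zero
  have h2 := N.aeval_self_charpoly
  rw [sub_eq_zero.mp h1] at h2
  simpa using h2

/-- the truncated exponential -/
noncomputable def EE {m : ℕ} (N : Matrix (Fin m) (Fin m) ℂ) (z : ℂ) : Matrix (Fin m) (Fin m) ℂ :=
  ∑ k ∈ Finset.range (m + 1), (z ^ k / (Nat.factorial k : ℂ)) • N ^ k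

lemma EE_eq_exp {m : ℕ} (N : Matrix (Fin m) (Fin m) ℂ) (h : IsNilpotent N) (z : ℂ) :
    EE N z = IsNilpotent.exp (z • N) := by
  rw [IsNilpotent.exp_eq_sum (k := m + 1)
    (by rw [smul_pow, pow_succ N, nil_pow N h, zero_mul, smul_zero]), EE]
  refine Finset.sum_congr rfl fun k _ => ?_
  ext i j
  simp only [smul_pow, Matrix.smul_apply, smul_eq_mul, Rat.smul_def]
  push_cast
  ring

lemma EE_add {m : ℕ} (N : Matrix (Fin m) (Fin m) ℂ) (h : IsNilpotent N) (z w : ℂ) :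
    EE N (z + w) = EE N z * EE N w := by
  rw [EE_eq_exp N h, EE_eq_exp N h, EE_eq_exp N h, add_smul]
  refine IsNilpotent.exp_add_of_commute ?_ (h.smul z) (h.smul w)
  exact ((Commute.refl N).smul_left z).smul_right w

lemma pow_skew {m : ℕ} (N Q : Matrix (Fin m) (Fin m) ℂ) (h : N.transpose * Q + Q * N = 0)
    (k : ℕ) : (N ^ k).transpose * Q = (-1 : ℂ) ^ k • (Q * N ^ k) := by
  induction k with
  | zero => simp
  | succ k ih =>
    have h' : N.transpose * Q = -(Q * N) := eq_neg_of_add_eq_zero_left h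
    rw [pow_succ, Matrix.transpose_mul, Matrix.mul_assoc, ih, Matrix.mul_smul,
      ← Matrix.mul_assoc, h', Matrix.neg_mul, Matrix.mul_assoc, ← pow_succ', ← pow_succ]
    simp [pow_succ]

lemma EE_skew {m : ℕ} (N Q : Matrix (Fin m) (Fin m) ℂ) (h : N.transpose * Q + Q * N = 0)
    (z : ℂ) : (EE N z).transpose * Q = Q * EE N (-z) := by
  unfold EE
  rw [Matrix.transpose_sum, Finset.sum_mul, Finset.mul_sum]
  refine Finset.sum_congr rfl fun k _ => ?_
  rw [Matrix.transpose_smul, Matrix.smul_mul, pow_skew N Q h, Matrix.mul_smul, smul_smul,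
    neg_pow z]
  congr 1
  ring

lemma EE_star {m : ℕ} (N : Matrix (Fin m) (Fin m) ℂ) (h : N.map (starRingEnd ℂ) = N)
    (z : ℂ) (u : Fin m → ℂ) :
    star ((EE N z).mulVec u) = (EE N ((starRingEnd ℂ) z)).mulVec (star u) := by
  have h2 : ∀ k, (N ^ k).map (starRingEnd ℂ) = N ^ k := fun k => by
    have := Matrix.map_pow N (starRingEnd ℂ) k
    rw [h] at this
    exact this
  have h1 : (EE N z).map (starRingEnd ℂ) = EE N ((starRingEnd ℂ) z) := by
    ext i j
    simp only [EE, Matrix.map_apply, Matrix.sum_apply, Matrix.smul_apply, map_sum, smul_eq_mul,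
      map_mul, map_div₀, map_pow, map_natCast]
    refine Finset.sum_congr rfl fun k _ => ?_
    congr 1
    exact congrFun (congrFun (h2 k) i) j
  rw [← h1]
  ext i
  simp [Matrix.mulVec, dotProduct]

lemma pair_move {m : ℕ} (A B Q : Matrix (Fin m) (Fin m) ℂ) (h : A.transpose * Q = Q * B)
    (u v : Fin m → ℂ) :
    dotProduct (A.mulVec u) (Q.mulVec v) = dotProduct u (Q.mulVec (B.mulVec v)) := by
  rw [Matrix.mulVec_mulVec, ← h, ← Matrix.mulVec_mulVec, Matrix.dotProduct_mulVec u,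
    Matrix.vecMul_transpose]

lemma pair_EE {m : ℕ} (N Q : Matrix (Fin m) (Fin m) ℂ) (hn : IsNilpotent N)
    (h : N.transpose * Q + Q * N = 0) (hs : N.map (starRingEnd ℂ) = N) (x y : ℝ)
    (u : Fin m → ℂ) :
    dotProduct ((EE N ((x : ℂ) + y * Complex.I)).mulVec u)
      (Q.mulVec (star ((EE N ((x : ℂ) + y * Complex.I)).mulVec u))) =
    dotProduct ((EE N (2 * Complex.I * y)).mulVec u) (Q.mulVec (star u)) := by
  rw [EE_star N hs, pair_move _ _ _ (EE_skew N Q h _), pair_move _ _ _ (EE_skew N Q h _),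
    Matrix.mulVec_mulVec (star u), ← EE_add N hn]
  congr 4
  simp
  ring

lemma pair_expand {m : ℕ} (N Q : Matrix (Fin m) (Fin m) ℂ) (z : ℂ) (u v : Fin m → ℂ) :
    dotProduct ((EE N z).mulVec u) (Q.mulVec v) =
    ∑ k ∈ Finset.range (m + 1), (z ^ k / (Nat.factorial k : ℂ)) *
      dotProduct ((N ^ k).mulVec u) (Q.mulVec v) := by
  unfold EE
  rw [Matrix.sum_mulVec, sum_dotProduct]
  refine Finset.sum_congr rfl fun k _ => ?_
  rw [Matrix.smul_mulVec, smul_dotProduct, smul_eq_mul]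

lemma pair_coord {m : ℕ} (A Q : Matrix (Fin m) (Fin m) ℂ) (u v : Fin m → ℂ) :
    dotProduct (A.mulVec u) (Q.mulVec v) =
    ∑ i, ∑ j, (A.transpose * Q) i j * (u i * v j) := by
  have : dotProduct (A.mulVec u) (Q.mulVec v) = dotProduct u ((A.transpose * Q).mulVec v) := by
    rw [← Matrix.mulVec_mulVec, Matrix.dotProduct_mulVec u, Matrix.vecMul_transpose]
  rw [this]
  simp only [dotProduct, Matrix.mulVec, Finset.mul_sum]
  refine Finset.sum_congr rfl fun i _ => Finset.sum_congr rfl fun j _ => ?_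
  ring

end Alg

/-- asymptotic expansion `F(z) = p(y) + h(x,y)` of the twisted period pairing,
with `h` in the class 𝐡 and `p` a polynomial of degree at most `d` whose `y^d`-coefficient
is `((2i)^d/d!)·Q̃(N^d a₀, conj a₀) = ((-2i)^d/d!)·Q̃(a₀, N^d conj a₀)`; in particular `p`
has degree exactly `d` iff `Q̃(a₀, N^d conj a₀) ≠ 0`. -/
theorem period_pairing_asymptotic_expansion
    (n m : ℕ) (hn : 1 ≤ n) (hm : 1 ≤ m)
    (N Q : Matrix (Fin m) (Fin m) ℝ)
    (hNnil : IsNilpotent N)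
    (hQN : N.transpose * Q + Q * N = 0)
    (r : ℝ) (hr : 0 < r)
    (a : ℂ → (Fin m → ℂ))
    (ha : AnalyticOnNhd ℂ a (Metric.ball 0 r))
    (ha0 : a 0 ≠ 0)
    (Nc : Matrix (Fin m) (Fin m) ℂ) (hNc : Nc = N.map Complex.ofReal)
    (Qc : (Fin m → ℂ) → (Fin m → ℂ) → ℂ)
    (hQc : ∀ u v, Qc u v = ∑ j, ∑ k, u j * (Q j k : ℂ) * v k)
    (Qt : (Fin m → ℂ) → (Fin m → ℂ) → ℂ)
    (hQt : ∀ u v, Qt u v = Complex.I ^ n * Qc u v)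
    (d : ℕ)
    (hd1 : (Nc ^ d).mulVec (a 0) ≠ 0)
    (hd2 : (Nc ^ (d + 1)).mulVec (a 0) = 0)
    (y₀ : ℝ) (hy₀ : y₀ = max 0 (-(Real.log r) / (2 * Real.pi)))
    (Expz : ℂ → Matrix (Fin m) (Fin m) ℂ)
    (hExpz : ∀ z : ℂ, Expz z =
      ∑ k ∈ Finset.range (m + 1), (z ^ k / (Nat.factorial k : ℂ)) • Nc ^ k)
    (F : ℝ → ℝ → ℂ)
    (hF : ∀ x y : ℝ, F x y =
      Qt ((Expz ((x : ℂ) + (y : ℂ) * Complex.I)).mulVec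
            (a (Complex.exp (2 * Real.pi * Complex.I * ((x : ℂ) + (y : ℂ) * Complex.I)))))
         (star ((Expz ((x : ℂ) + (y : ℂ) * Complex.I)).mulVec
            (a (Complex.exp (2 * Real.pi * Complex.I * ((x : ℂ) + (y : ℂ) * Complex.I)))))))
    (p : ℝ → ℂ)
    (hp : ∀ y : ℝ, p y = Qt ((Expz (2 * Complex.I * (y : ℂ))).mulVec (a 0)) (star (a 0))) :
    (∃ h : ℝ → ℝ → ℂ, InClassH y₀ h ∧ ∀ x y : ℝ, y₀ < y → F x y = p y + h x y) ∧
    (∃ P : Polynomial ℂ, (∀ y : ℝ, p y = P.eval (y : ℂ)) ∧ P.degree ≤ (d : ℕ) ∧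
      P.coeff d = ((2 * Complex.I) ^ d / (Nat.factorial d : ℂ)) *
        Qt ((Nc ^ d).mulVec (a 0)) (star (a 0)) ∧
      (P.degree = (d : ℕ) ↔ Qt (a 0) ((Nc ^ d).mulVec (star (a 0))) ≠ 0)) ∧
    ((2 * Complex.I) ^ d / (Nat.factorial d : ℂ)) *
        Qt ((Nc ^ d).mulVec (a 0)) (star (a 0)) =
      ((-2 * Complex.I) ^ d / (Nat.factorial d : ℂ)) *
        Qt (a 0) ((Nc ^ d).mulVec (star (a 0))) := by
  have hnil : IsNilpotent Nc := by
    rw [hNc]; exact hNnil.map (Complex.ofRealHom.mapMatrix)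
  set Qm : Matrix (Fin m) (Fin m) ℂ := Q.map Complex.ofReal with hQm
  have hskew : Nc.transpose * Qm + Qm * Nc = 0 := by
    have h1 := congrArg (Complex.ofRealHom.mapMatrix) hQN
    rw [map_add, map_mul, map_mul, map_zero] at h1
    rw [hNc]
    exact h1
  have hs : Nc.map (starRingEnd ℂ) = Nc := by
    rw [hNc]; ext i j; simp
  have hE : Expz = EE Nc := by
    funext z; rw [hExpz]; rfl
  subst hE
  have hQ : ∀ u v, Qt u v = Complex.I ^ n * dotProduct u (Qm.mulVec v) := by
    intro u v
    rw [hQt, hQc]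
    congr 1
    simp only [dotProduct, Matrix.mulVec, Finset.mul_sum, hQm, Matrix.map_apply]
    refine Finset.sum_congr rfl fun i _ => Finset.sum_congr rfl fun j _ => ?_
    ring
  have hvan : ∀ k, d < k → (Nc ^ k).mulVec (a 0) = 0 := by
    intro k hk
    obtain ⟨l, rfl⟩ := Nat.exists_eq_add_of_le hk
    rw [Nat.succ_eq_add_one, add_comm, pow_add, ← Matrix.mulVec_mulVec, hd2, Matrix.mulVec_zero]
  have hdm : d < m + 1 := by
    by_contra hcon
    apply hd1
    have : m ≤ d := by omega
    rw [pow_eq_zero_of_le this (nil_pow Nc hnil), Matrix.zero_mulVec]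
  have hlast : ((2 * Complex.I) ^ d / (Nat.factorial d : ℂ)) *
        Qt ((Nc ^ d).mulVec (a 0)) (star (a 0)) =
      ((-2 * Complex.I) ^ d / (Nat.factorial d : ℂ)) *
        Qt (a 0) ((Nc ^ d).mulVec (star (a 0))) := by
    rw [hQ, hQ, pair_move _ ((-1 : ℂ) ^ d • Nc ^ d) Qm
      (by rw [pow_skew Nc Qm hskew, Matrix.mul_smul]), Matrix.smul_mulVec, Matrix.mulVec_smul,
      dotProduct_smul, smul_eq_mul, neg_mul, neg_pow (2 * Complex.I)]
    ring
  refine ⟨?_, ?_, hlast⟩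
  · refine ⟨fun x y => F x y - p y, ?_, fun x y _ => by ring⟩
    refine TT.inClassH hr hy₀ ?_
    have hai : ∀ i, AnalyticOnNhd ℂ (fun z => a z i) (Metric.ball 0 r) := fun i z hz =>
      (analyticAt_pi_iff.mp (ha z hz)) i
    refine TT.congr _ _ (TT.sum (Finset.range (m + 1))
      (fun k x y => ∑ i, ∑ j,
        ((Complex.I ^ n * ((2 * Complex.I) ^ k / (Nat.factorial k : ℂ)) *
          ((Nc ^ k).transpose * Qm) i j) * (y : ℂ) ^ k *
            ((a (qq x y) i - a 0 i) * (starRingEnd ℂ) (a (qq x y) j)) +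
        (Complex.I ^ n * ((2 * Complex.I) ^ k / (Nat.factorial k : ℂ)) *
          ((Nc ^ k).transpose * Qm) i j) * (y : ℂ) ^ k *
            (a 0 i * (starRingEnd ℂ) (a (qq x y) j - a 0 j)))) ?_) ?_
    · intro k _
      refine TT.sum _ _ fun i _ => TT.sum _ _ fun j _ => TT.add _ _ ?_ ?_
      · exact TT.basic k _ (fun z => a z i - a 0 i) (fun z => a z j)
          ((hai i).sub analyticOnNhd_const) (hai j) (by simp)
      · exact TT.basic k _ (fun _ => a 0 i) (fun z => a z j - a 0 j)
          analyticOnNhd_const ((hai j).sub analyticOnNhd_const) (by simp)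
    · intro x y _
      change F x y - p y = _
      rw [hF, hp, hQ, hQ, pair_EE Nc Qm hnil hskew hs, pair_expand, pair_expand, ← mul_sub,
        ← Finset.sum_sub_distrib, Finset.mul_sum]
      refine Finset.sum_congr rfl fun k _ => ?_
      rw [pair_coord, pair_coord, ← mul_sub, ← Finset.sum_sub_distrib, Finset.mul_sum,
        Finset.mul_sum]
      refine Finset.sum_congr rfl fun i _ => ?_
      rw [← Finset.sum_sub_distrib, Finset.mul_sum, Finset.mul_sum]
      refine Finset.sum_congr rfl fun j _ => ?_
      simp only [Pi.star_apply, RCLike.star_def, map_sub, mul_pow]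
      unfold qq
      ring
  · set c : ℕ → ℂ := fun k => ((2 * Complex.I) ^ k / (Nat.factorial k : ℂ)) *
        Qt ((Nc ^ k).mulVec (a 0)) (star (a 0)) with hc
    have hc0 : ∀ k, d < k → c k = 0 := fun k hk => by
      simp only [hc, hQ, hvan k hk, zero_dotProduct, mul_zero]
    have hcoeff : (∑ k ∈ Finset.range (m + 1), Polynomial.monomial k (c k)).coeff d = c d := by
      simp [Polynomial.coeff_monomial, hdm]
    have hdeg : (∑ k ∈ Finset.range (m + 1), Polynomial.monomial k (c k)).degree ≤ (d : ℕ) := by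
      refine (Polynomial.degree_sum_le _ _).trans (Finset.sup_le fun k _ => ?_)
      rcases lt_or_ge d k with h | h
      · simp [hc0 k h]
      · exact (Polynomial.degree_monomial_le _ _).trans (by exact_mod_cast h)
    refine ⟨∑ k ∈ Finset.range (m + 1), Polynomial.monomial k (c k), ?_, hdeg, hcoeff, ?_⟩
    · intro y
      rw [hp, hQ, pair_expand, Polynomial.eval_finsetSum, Finset.mul_sum]
      refine Finset.sum_congr rfl fun k _ => ?_
      rw [Polynomial.eval_monomial]
      simp only [hc, hQ, mul_pow]
      ring
    · have hne : ((-2 * Complex.I) ^ d / (Nat.factorial d : ℂ)) ≠ 0 :=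
        div_ne_zero (pow_ne_zero _ (by simp)) (by exact_mod_cast Nat.factorial_ne_zero d)
      have hiff : c d ≠ 0 ↔ Qt (a 0) ((Nc ^ d).mulVec (star (a 0))) ≠ 0 := by
        simp only [hc]
        rw [hlast, mul_ne_zero_iff]
        exact ⟨fun h => h.2, fun h => ⟨hne, h⟩⟩
      rw [← hiff, ← hcoeff]
      constructor
      · intro h
        exact Polynomial.coeff_ne_zero_of_eq_degree h
      · intro h
        exact le_antisymm hdeg (Polynomial.le_degree_of_ne_zero h)
end

section
/- Let d ≥ 1 be an integer, p : ℝ → ℝ a polynomial function of degree d with positive leading coefficient, y₀ ∈ ℝ, and h a real-valued function in the class 𝐡 on {(x,y) : y > y₀}. Set F(x,y) := p(y) + h(x,y). Then: (i) there exists Y > y₀ such that F(x,y) > 0 for all x ∈ ℝ and all y ≥ Y; (ii) sup_{x ∈ ℝ} | y² · ((∂_x² + ∂_y²) log F)(x,y) + d | → 0 as y → ∞; in particular, there exists Y' > y₀ such that −((∂_x² + ∂_y²) log F)(x,y) > 0 for all x ∈ ℝ and all y ≥ Y'. -/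
open Filter Topology

lemma aux_eventually_C2 {g : ℝ → ℝ} {t : ℝ} (hg : ContDiffAt ℝ 2 g t) :
    ∀ᶠ s in 𝓝 t, DifferentiableAt ℝ g s :=
  (hg.eventually (by simp)).mono fun s hs => hs.differentiableAt (by simp)

lemma aux_deriv_diff {g : ℝ → ℝ} {t : ℝ} (hg : ContDiffAt ℝ 2 g t) :
    DifferentiableAt ℝ (deriv g) t := by
  have h1 : ContDiffAt ℝ 1 (deriv g) t := ContDiffAt.derivWithin hg (by norm_num)
  exact h1.differentiableAt (by simp)

lemma aux_log {g : ℝ → ℝ} {t : ℝ} (hg : ContDiffAt ℝ 2 g t) (h0 : 0 < g t) :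
    deriv (deriv (fun s => Real.log (g s))) t
      = deriv (deriv g) t / g t - (deriv g t / g t) ^ 2 := by
  have hd := aux_eventually_C2 hg
  have hne : ∀ᶠ s in 𝓝 t, g s ≠ 0 := hg.continuousAt.eventually_ne h0.ne'
  have he : deriv (fun s => Real.log (g s)) =ᶠ[𝓝 t] fun s => deriv g s / g s := by
    filter_upwards [hd, hne] with s h1 h2
    exact deriv.log h1 h2
  rw [he.deriv_eq, deriv_fun_div (aux_deriv_diff hg) hd.self_of_nhds h0.ne']
  field_simp

lemma aux_add {a b : ℝ → ℝ} {t : ℝ} (ha : ContDiffAt ℝ 2 a t) (hb : ContDiffAt ℝ 2 b t) :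
    deriv (deriv (fun s => a s + b s)) t = deriv (deriv a) t + deriv (deriv b) t := by
  have he : deriv (fun s => a s + b s) =ᶠ[𝓝 t] fun s => deriv a s + deriv b s := by
    filter_upwards [aux_eventually_C2 ha, aux_eventually_C2 hb] with s h1 h2
    exact deriv_fun_add h1 h2
  rw [he.deriv_eq, deriv_fun_add (aux_deriv_diff ha) (aux_deriv_diff hb)]

/-- The Euler operator preserves the degree and multiplies the leading coefficient. -/
lemma aux_theta {p : Polynomial ℝ} {d : ℕ} (hd : 1 ≤ d) (hdeg : p.degree = (d : WithBot ℕ)) :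
    (Polynomial.X * p.derivative).degree = (d : WithBot ℕ) ∧
    (Polynomial.X * p.derivative).leadingCoeff = d * p.leadingCoeff := by
  have hn : p.natDegree = d := Polynomial.natDegree_eq_of_degree_eq_some hdeg
  have h1 : p.derivative.degree = ((d - 1 : ℕ) : WithBot ℕ) := by
    rw [Polynomial.degree_derivative (by omega), hn]
  refine ⟨?_, ?_⟩
  · rw [Polynomial.degree_mul, h1, Polynomial.degree_X]
    norm_cast
    omega
  · rw [Polynomial.leadingCoeff_mul, Polynomial.leadingCoeff_X, one_mul, Polynomial.leadingCoeff,
      Polynomial.natDegree_eq_of_degree_eq_some h1, Polynomial.coeff_derivative,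
      Polynomial.leadingCoeff, hn]
    have : d - 1 + 1 = d := by omega
    rw [this]
    have h2 : ((d - 1 : ℕ) : ℝ) + 1 = d := by exact_mod_cast this
    rw [h2, mul_comm]

lemma aux_exists {y₀ : ℝ} {P : ℝ → ℝ → Prop}
    (hP : ∀ᶠ q : ℝ × ℝ in (⊤ : Filter ℝ) ×ˢ atTop, P q.1 q.2) :
    ∃ Y : ℝ, y₀ < Y ∧ ∀ x y : ℝ, Y ≤ y → P x y := by
  rw [Filter.eventually_prod_iff] at hP
  obtain ⟨pa, ha, pb, hb, hab⟩ := hP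
  obtain ⟨Y, hY⟩ := eventually_atTop.1 hb
  refine ⟨max Y (y₀ + 1), lt_of_lt_of_le (by linarith) (le_max_right _ _), fun x y hy => ?_⟩
  exact hab (by simpa using (eventually_top.1 ha) x) (hY y (le_trans (le_max_left _ _) hy))

lemma aux_decay {k : ℝ → ℝ → ℝ} (n : ℕ)
    (hk : ∃ C : ℝ, 0 < C ∧ ∃ Y : ℝ, ∀ x y : ℝ, Y ≤ y →
      ‖k x y‖ ≤ C * Real.exp (-Real.pi * y)) :
    Tendsto (fun q : ℝ × ℝ => q.2 ^ n * k q.1 q.2) ((⊤ : Filter ℝ) ×ˢ atTop) (𝓝 0) := by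
  obtain ⟨C, hC, Y, hY⟩ := hk
  have hs : Tendsto (fun q : ℝ × ℝ => q.2) ((⊤ : Filter ℝ) ×ˢ atTop) atTop := tendsto_snd
  have h1 : Tendsto (fun y : ℝ => C * (y ^ n * Real.exp (-y))) atTop (𝓝 0) := by
    simpa using (Real.tendsto_pow_mul_exp_neg_atTop_nhds_zero n).const_mul C
  refine squeeze_zero_norm' ?_ (h1.comp hs)
  filter_upwards [hs.eventually_ge_atTop Y, hs.eventually_ge_atTop 0] with q hq hq0
  have h2 := hY q.1 q.2 hq
  have h3 : Real.exp (-Real.pi * q.2) ≤ Real.exp (-q.2) := by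
    apply Real.exp_le_exp.2
    nlinarith [Real.pi_gt_three]
  rw [norm_mul, norm_pow, Real.norm_of_nonneg hq0]
  simp only [Function.comp]
  calc q.2 ^ n * ‖k q.1 q.2‖ ≤ q.2 ^ n * (C * Real.exp (-q.2)) := by
        gcongr
        exact h2.trans (by gcongr)
    _ = _ := by ring

/-- if `F = p(y) + h(x,y)` with `p` a real polynomial of degree `d ≥ 1` with
positive leading coefficient and `h` in the class 𝐡, then `F` is eventually positive,
`y²·Δ(log F) → -d` uniformly in `x` as `y → ∞`, and in particular `-Δ(log F)` is
eventually positive. -/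
theorem laplacian_log_of_polynomial_plus_h
    (d : ℕ) (hd : 1 ≤ d) (p : Polynomial ℝ)
    (hdeg : p.degree = (d : ℕ)) (hlead : 0 < p.leadingCoeff)
    (y₀ : ℝ) (h : ℝ → ℝ → ℝ) (hh : InClassH y₀ h)
    (F : ℝ → ℝ → ℝ) (hF : ∀ x y : ℝ, F x y = p.eval y + h x y) :
    (∃ Y : ℝ, y₀ < Y ∧ ∀ x y : ℝ, Y ≤ y → 0 < F x y) ∧
    (∀ ε : ℝ, 0 < ε → ∃ Y : ℝ, y₀ < Y ∧ ∀ x y : ℝ, Y ≤ y →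
      |y ^ 2 * (pdX (pdX (fun x' y' => Real.log (F x' y'))) x y +
                pdY (pdY (fun x' y' => Real.log (F x' y'))) x y) + (d : ℝ)| ≤ ε) ∧
    (∃ Y' : ℝ, y₀ < Y' ∧ ∀ x y : ℝ, Y' ≤ y →
      0 < -(pdX (pdX (fun x' y' => Real.log (F x' y'))) x y +
            pdY (pdY (fun x' y' => Real.log (F x' y'))) x y)) := by
  obtain ⟨hsm, hdec⟩ := hh
  have hdec' : ∀ r s : ℕ, ∃ C : ℝ, 0 < C ∧ ∃ Y : ℝ, ∀ x y : ℝ, Y ≤ y →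
      ‖(pdX^[r] (pdY^[s] h)) x y‖ ≤ C * Real.exp (-Real.pi * y) := by
    intro r s
    obtain ⟨C, hC, Y, -, hY⟩ := hdec r s
    exact ⟨C, hC, Y, hY⟩
  set l : Filter (ℝ × ℝ) := (⊤ : Filter ℝ) ×ˢ atTop with hl
  have hs : Tendsto (fun q : ℝ × ℝ => q.2) l atTop := tendsto_snd
  -- polynomial limits
  have hPtop : Tendsto (fun y => p.eval y) atTop atTop :=
    p.tendsto_atTop_of_leadingCoeff_nonneg (by rw [hdeg]; exact_mod_cast hd) hlead.le
  obtain ⟨hθ1, hθ2⟩ := aux_theta hd hdeg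
  obtain ⟨hθθ1, hθθ2⟩ := aux_theta hd hθ1
  have lim1 : Tendsto (fun y => y * p.derivative.eval y / p.eval y) atTop (𝓝 (d : ℝ)) := by
    have := Polynomial.div_tendsto_atTop_leadingCoeff_div_of_degree_eq
      (Polynomial.X * p.derivative) p (by rw [hθ1, hdeg])
    rw [hθ2, mul_div_assoc, div_self hlead.ne', mul_one] at this
    simpa using this
  have lim2 : Tendsto (fun y => y ^ 2 * p.derivative.derivative.eval y / p.eval y) atTop
      (𝓝 ((d : ℝ) * d - d)) := by
    have := Polynomial.div_tendsto_atTop_leadingCoeff_div_of_degree_eq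
      (Polynomial.X * (Polynomial.X * p.derivative).derivative) p (by rw [hθθ1, hdeg])
    rw [hθθ2, hθ2, ← mul_assoc, mul_div_assoc, div_self hlead.ne', mul_one] at this
    refine (this.sub lim1).congr fun y => ?_
    simp
    ring
  have hinv : Tendsto (fun q : ℝ × ℝ => (p.eval q.2)⁻¹) l (𝓝 0) :=
    tendsto_inv_atTop_zero.comp (hPtop.comp hs)
  have hq : ∀ (n r s : ℕ), Tendsto (fun q : ℝ × ℝ =>
      q.2 ^ n * (pdX^[r] (pdY^[s] h)) q.1 q.2 * (p.eval q.2)⁻¹) l (𝓝 0) := by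
    intro n r s
    simpa using (aux_decay n (hdec' r s)).mul hinv
  have hPpos : ∀ᶠ q in l, 0 < p.eval q.2 := (hPtop.comp hs).eventually_gt_atTop 0
  have limF : Tendsto (fun q : ℝ × ℝ => F q.1 q.2 / p.eval q.2) l (𝓝 1) := by
    have h1 := (hq 0 0 0).const_add 1
    rw [add_zero] at h1
    refine h1.congr' ?_
    filter_upwards [hPpos] with q hq
    simp only [hF, Function.iterate_zero, id, pow_zero, one_mul]
    field_simp
  have hFpos : ∀ᶠ q in l, 0 < F q.1 q.2 := by
    filter_upwards [hPpos, limF.eventually (lt_mem_nhds one_pos)] with q h1 h2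
    exact (div_pos_iff_of_pos_right h1).1 h2
  -- derivative formula
  have hform : ∀ᶠ q in l, pdX (pdX (fun x' y' => Real.log (F x' y'))) q.1 q.2 +
      pdY (pdY (fun x' y' => Real.log (F x' y'))) q.1 q.2 =
      (pdX^[2] (pdY^[0] h) q.1 q.2) / F q.1 q.2
        - (pdX^[1] (pdY^[0] h) q.1 q.2 / F q.1 q.2) ^ 2
      + ((p.derivative.derivative.eval q.2 + pdX^[0] (pdY^[2] h) q.1 q.2) / F q.1 q.2
        - ((p.derivative.eval q.2 + pdX^[0] (pdY^[1] h) q.1 q.2) / F q.1 q.2) ^ 2) := by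
    filter_upwards [hFpos, hs.eventually_gt_atTop y₀] with q hFq hyq
    obtain ⟨x, y⟩ := q
    simp only at hFq hyq ⊢
    have hopen : IsOpen {q : ℝ × ℝ | y₀ < q.2} := isOpen_lt continuous_const continuous_snd
    have hat : ContDiffAt ℝ 2 (fun q : ℝ × ℝ => h q.1 q.2) (x, y) :=
      (hsm.contDiffAt (hopen.mem_nhds hyq)).of_le (WithTop.coe_le_coe.2 (le_top : (2 : ℕ∞) ≤ ⊤))
    have hx : ContDiffAt ℝ 2 (fun x' => h x' y) x :=
      ContDiffAt.comp (f := fun x' : ℝ => (x', y)) (g := fun q : ℝ × ℝ => h q.1 q.2) x hat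
        (by fun_prop)
    have hy : ContDiffAt ℝ 2 (fun y' => h x y') y :=
      ContDiffAt.comp (f := fun y' : ℝ => (x, y')) (g := fun q : ℝ × ℝ => h q.1 q.2) y hat
        (by fun_prop)
    have hp : ContDiffAt ℝ 2 (fun y' => p.eval y') y := by
      simpa using (Polynomial.contDiff_aeval (𝕜 := ℝ) p 2).contDiffAt (x := y)
    have hFx : (fun x' => F x' y) = fun x' => p.eval y + h x' y := by ext; rw [hF]
    have hFy : (fun y' => F x y') = fun y' => p.eval y' + h x y' := by ext; rw [hF]
    have e1 : pdX (pdX (fun x' y' => Real.log (F x' y'))) x y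
        = deriv (deriv (fun x' => h x' y)) x / F x y - (deriv (fun x' => h x' y) x / F x y) ^ 2 := by
      have := aux_log (g := fun x' => F x' y) (t := x)
        (by rw [hFx]; exact contDiffAt_const.add hx) hFq
      rw [hFx] at this
      simp only [deriv_const_add'] at this
      exact this
    have e2 : pdY (pdY (fun x' y' => Real.log (F x' y'))) x y
        = (p.derivative.derivative.eval y + deriv (deriv (fun y' => h x y')) y) / F x y
          - ((p.derivative.eval y + deriv (fun y' => h x y') y) / F x y) ^ 2 := by
      have := aux_log (g := fun y' => F x y') (t := y)
        (by rw [hFy]; exact hp.add hy) hFq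
      rw [hFy, aux_add hp hy, deriv_fun_add (hp.differentiableAt (by simp))
        (hy.differentiableAt (by simp))] at this
      have hdp : deriv (fun y' => p.eval y') = fun y' => p.derivative.eval y' := by
        ext; simp
      rw [hdp, Polynomial.deriv] at this
      exact this
    rw [e1, e2]
    rfl
  -- limit
  have hlim : Tendsto (fun q : ℝ × ℝ =>
      q.2 ^ 2 * (pdX (pdX (fun x' y' => Real.log (F x' y'))) q.1 q.2 +
        pdY (pdY (fun x' y' => Real.log (F x' y'))) q.1 q.2) + (d : ℝ)) l (𝓝 0) := by
    have L := (((((hq 2 2 0).div limF one_ne_zero).sub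
      (((hq 1 1 0).div limF one_ne_zero).pow 2)).add
      ((((lim2.comp hs).add (hq 2 0 2)).div limF one_ne_zero).sub
      ((((lim1.comp hs).add (hq 1 0 1)).div limF one_ne_zero).pow 2))).add_const (d : ℝ))
    have h0 : (0 / 1 - (0 / 1) ^ 2 + (((d : ℝ) * d - d + 0) / 1 - (((d : ℝ) + 0) / 1) ^ 2) + d)
      = 0 := by ring
    rw [h0] at L
    refine L.congr' ?_
    filter_upwards [hform, hPpos, hFpos] with q h1 h2 h3
    rw [h1]
    simp only [Function.comp, Pi.div_apply]
    field_simp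
  have part2 : ∀ ε : ℝ, 0 < ε → ∃ Y : ℝ, y₀ < Y ∧ ∀ x y : ℝ, Y ≤ y →
      |y ^ 2 * (pdX (pdX (fun x' y' => Real.log (F x' y'))) x y +
                pdY (pdY (fun x' y' => Real.log (F x' y'))) x y) + (d : ℝ)| ≤ ε := by
    intro ε hε
    apply aux_exists (P := fun x y => |y ^ 2 * (pdX (pdX (fun x' y' => Real.log (F x' y'))) x y +
                pdY (pdY (fun x' y' => Real.log (F x' y'))) x y) + (d : ℝ)| ≤ ε)
    filter_upwards [hlim.eventually (Metric.closedBall_mem_nhds 0 hε)] with q hq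
    simpa using hq
  refine ⟨aux_exists (P := fun x y => 0 < F x y) hFpos, part2, ?_⟩
  obtain ⟨Y, hY, hb⟩ := part2 (1 / 2) (by norm_num)
  refine ⟨Y, hY, fun x y hy => ?_⟩
  have h1 := (abs_le.1 (hb x y hy)).2
  have hd' : (1 : ℝ) ≤ d := by exact_mod_cast hd
  by_contra hcon
  have h2 := mul_nonneg (sq_nonneg y) (not_lt.1 hcon |> neg_nonpos.1)
  linarith
end

section
/- With the setup below, assume additionally that Qᵀ = (−1)^n·Q, that N·a₀ = 0, and that Q̃(a₀, conj a₀) is a positive real number. Then F is real-valued, and there exist Y > y₀ and a constant C > 0 such that F > 0 on {(x,y) : y ≥ Y} and |((∂_x² + ∂_y²) log F)(x,y)| ≤ C·e^{−π y} for all x ∈ ℝ and all y ≥ Y; consequently, for every x₀ ∈ ℝ the vertical ray γ(s) := x₀ + i(Y + s), s ∈ [0,∞), has finite length with respect to the density |(∂_x² + ∂_y²) log F|: the function s ↦ √(|((∂_x² + ∂_y²) log F)(x₀, Y + s)|) is Lebesgue integrable on [0,∞). -/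
open MeasureTheory

section Helpers

open Filter Topology

lemma fd_pow_eq_zero {m : ℕ} (N : Matrix (Fin m) (Fin m) ℝ) (h : IsNilpotent N) : N ^ m = 0 := by
  have h1 := (Matrix.isNilpotent_charpoly_sub_pow_of_isNilpotent h).eq_zero
  have h2 : N.charpoly = Polynomial.X ^ m := by simpa using sub_eq_zero.1 h1
  have h3 := Matrix.aeval_self_charpoly N
  rw [h2] at h3
  simpa using h3

noncomputable def fdE {m : ℕ} (M : Matrix (Fin m) (Fin m) ℂ) (z : ℂ) : Matrix (Fin m) (Fin m) ℂ :=
  ∑ k ∈ Finset.range (m + 1), (z ^ k / (Nat.factorial k : ℂ)) • M ^ k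

lemma fdE_eq_exp {m : ℕ} (M : Matrix (Fin m) (Fin m) ℂ) (hM : M ^ m = 0) (z : ℂ) :
    fdE M z = IsNilpotent.exp (z • M) := by
  have : (z • M) ^ (m + 1) = 0 := by rw [smul_pow, pow_succ M, hM]; simp
  rw [IsNilpotent.exp_eq_sum this, fdE]
  refine Finset.sum_congr rfl fun k _ => ?_
  rw [smul_pow]
  ext i j
  simp [Matrix.smul_apply, Rat.smul_def]
  ring

lemma fdE_add {m : ℕ} (M : Matrix (Fin m) (Fin m) ℂ) (hM : M ^ m = 0) (z w : ℂ) :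
    fdE M (z + w) = fdE M z * fdE M w := by
  have hn : ∀ z : ℂ, IsNilpotent (z • M) := fun z => ⟨m, by rw [smul_pow, hM]; simp⟩
  rw [fdE_eq_exp M hM, fdE_eq_exp M hM, fdE_eq_exp M hM, add_smul]
  exact IsNilpotent.exp_add_of_commute (((Commute.refl M).smul_left z).smul_right w) (hn z) (hn w)

lemma fdE_zero {m : ℕ} (M : Matrix (Fin m) (Fin m) ℂ) (hM : M ^ m = 0) : fdE M 0 = 1 := by
  rw [fdE_eq_exp M hM, zero_smul, IsNilpotent.exp_zero]

lemma fdE_isom {m : ℕ} (M Q : Matrix (Fin m) (Fin m) ℂ) (hM : M ^ m = 0)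
    (hQ : M.transpose * Q + Q * M = 0) (z : ℂ) :
    (fdE M z).transpose * Q * fdE M z = Q := by
  have h1 : SemiconjBy Q (-M) M.transpose := by
    unfold SemiconjBy
    rw [mul_neg, eq_comm]; exact eq_neg_of_add_eq_zero_left hQ
  have h2 : (fdE M z).transpose * Q = Q * fdE M (-z) := by
    unfold fdE
    rw [Matrix.transpose_sum, Finset.sum_mul, Finset.mul_sum]
    refine Finset.sum_congr rfl fun k _ => ?_
    have := (h1.pow_right k).eq
    rw [Matrix.transpose_smul, Matrix.transpose_pow, smul_mul_assoc, ← this]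
    rw [show (-M) ^ k = (-1 : ℂ) ^ k • M ^ k by rw [← smul_pow]; simp, neg_pow z k]
    simp only [mul_smul_comm, smul_smul]
    congr 1; ring
  rw [h2, mul_assoc, ← fdE_add M hM, neg_add_cancel, fdE_zero M hM, mul_one]

lemma fdE_star {m : ℕ} (N : Matrix (Fin m) (Fin m) ℝ) (x : ℝ) (u : Fin m → ℂ) :
    star ((fdE (N.map Complex.ofReal) x).mulVec u) =
      (fdE (N.map Complex.ofReal) x).mulVec (star u) := by
  have hp : ∀ k, (N.map Complex.ofReal) ^ k = (N ^ k).map Complex.ofReal := fun k =>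
    (Matrix.map_pow N Complex.ofRealHom k).symm
  have : ∀ i j, star (fdE (N.map Complex.ofReal) x i j) = fdE (N.map Complex.ofReal) x i j := by
    intro i j
    simp [fdE, Matrix.sum_apply, hp]
  ext i
  simp only [Pi.star_apply, Matrix.mulVec, dotProduct, star_sum, star_mul', this]

lemma fd_shift {m : ℕ} (N Q : Matrix (Fin m) (Fin m) ℝ) (hN : IsNilpotent N)
    (hQN : N.transpose * Q + Q * N = 0) (x : ℝ) (u : Fin m → ℂ) :
    let M := N.map Complex.ofReal
    ∑ j, ∑ k, ((fdE M x).mulVec u) j * (Q j k : ℂ) * (star ((fdE M x).mulVec u)) k =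
    ∑ j, ∑ k, u j * (Q j k : ℂ) * (star u) k := by
  intro M
  have hM : M ^ m = 0 := by
    have h := (Matrix.map_pow N Complex.ofRealHom m).symm
    rw [fd_pow_eq_zero N hN] at h
    refine Eq.trans h ?_
    ext i j; simp
  have key : ∀ u v : Fin m → ℂ, ∑ j, ∑ k, u j * (Q j k : ℂ) * v k =
      dotProduct u ((Q.map Complex.ofReal).mulVec v) := by
    intro u v
    simp [dotProduct, Matrix.mulVec, Finset.mul_sum, mul_assoc]
  have hQ : M.transpose * (Q.map Complex.ofReal) + (Q.map Complex.ofReal) * M = 0 := by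
    have := congrArg (fun A : Matrix (Fin m) (Fin m) ℝ => Complex.ofRealHom.mapMatrix A) hQN
    simp only [map_add, map_mul, map_zero] at this
    exact this
  rw [key, key, fdE_star]
  have := fdE_isom M _ hM hQ x
  rw [← Matrix.vecMul_transpose, ← Matrix.dotProduct_mulVec, Matrix.mulVec_mulVec, Matrix.mulVec_mulVec]
  exact congrArg (fun A => dotProduct u (Matrix.mulVec A (star u))) this

lemma fd_real {m n : ℕ} (Q : Matrix (Fin m) (Fin m) ℝ) 
    (hQsym : Q.transpose = (-1 : ℝ) ^ n • Q) (u : Fin m → ℂ) :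
    (Complex.I ^ n * ∑ j, ∑ k, u j * (Q j k : ℂ) * (star u) k).im = 0 := by
  rw [← Complex.conj_eq_iff_im]
  have hs : ∀ j k, (Q k j : ℂ) = (-1) ^ n * Q j k := by
    intro j k
    have := congrFun (congrFun hQsym j) k
    simp only [Matrix.transpose_apply, Matrix.smul_apply, smul_eq_mul] at this
    rw [this]; push_cast; ring
  simp only [map_mul, map_pow, Complex.conj_I, map_sum, Pi.star_apply, RCLike.star_def, Complex.conj_conj, Complex.conj_ofReal]
  rw [Finset.sum_comm, neg_pow, mul_comm ((-1 : ℂ) ^ n), mul_assoc, Finset.mul_sum]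
  congr 1
  refine Finset.sum_congr rfl fun j _ => ?_
  rw [Finset.mul_sum]
  refine Finset.sum_congr rfl fun k _ => ?_
  rw [hs k j]; ring

/-- the real part of the pairing as a real-bilinear map -/
noncomputable def fdB {m : ℕ} (n : ℕ) (Q : Matrix (Fin m) (Fin m) ℝ) :
    (Fin m → ℂ) →L[ℝ] (Fin m → ℂ) →L[ℝ] ℝ :=
  (LinearMap.mk₂ ℝ (fun u v : Fin m → ℂ =>
    (Complex.I ^ n * ∑ j, ∑ k, u j * (Q j k : ℂ) * (star v) k).re)
    (by intro a b c; rw [← Complex.add_re, ← mul_add]; simp [add_mul, Finset.sum_add_distrib])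
    (by
      intro c a b
      rw [smul_eq_mul, ← Complex.re_ofReal_mul, mul_left_comm]
      simp [Finset.mul_sum, mul_assoc])
    (by intro a b c; rw [← Complex.add_re, ← mul_add]; simp [mul_add, Finset.sum_add_distrib])
    (by
      intro c a b
      rw [smul_eq_mul, ← Complex.re_ofReal_mul, mul_left_comm]
      simp [Finset.mul_sum, mul_left_comm])).toContinuousBilinearMap

lemma fdB_apply {m : ℕ} (n : ℕ) (Q : Matrix (Fin m) (Fin m) ℝ) (u v) :
    fdB n Q u v = (Complex.I ^ n * ∑ j, ∑ k, u j * (Q j k : ℂ) * (star v) k).re := rfl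

lemma abs_sub_le_add (a b : ℝ) : |a - b| ≤ |a| + |b| := by
  simpa using norm_sub_le a b

lemma fd_log1 {E : Type*} [NormedAddCommGroup E] [NormedSpace ℝ E]
    (B : E →L[ℝ] E →L[ℝ] ℝ) (u u' : ℝ → E) (u'' : E) (f : ℝ → ℝ) (t : ℝ)
    (h1 : ∀ᶠ s in 𝓝 t, HasDerivAt u (u' s) s) (h2 : HasDerivAt u' u'' t)
    (hp : ∀ᶠ s in 𝓝 t, 0 < B (u s) (u s)) (hf : ∀ᶠ s in 𝓝 t, f s = Real.log (B (u s) (u s))) :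
    deriv (deriv f) t = (B u'' (u t) + 2 * B (u' t) (u' t) + B (u t) u'') / B (u t) (u t)
      - (B (u t) (u' t) + B (u' t) (u t)) ^ 2 / (B (u t) (u t)) ^ 2 := by
  have hB : ∀ (p q : ℝ → E) (p' q' : E) (s : ℝ), HasDerivAt p p' s → HasDerivAt q q' s →
      HasDerivAt (fun s => B (p s) (q s)) (B (p s) q' + B p' (q s)) s := by
    intro p q p' q' s hp hq
    exact B.hasDerivAt_of_bilinear (fun _ => hp) (fun _ => hq)
  have hd : deriv f =ᶠ[𝓝 t] fun s => (B (u s) (u' s) + B (u' s) (u s)) / B (u s) (u s) := by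
    filter_upwards [h1, hp, hf.eventually_nhds] with s a1 a2 a3
    have : f =ᶠ[𝓝 s] fun s => Real.log (B (u s) (u s)) := a3
    rw [this.deriv_eq]
    exact ((hB u u _ _ s a1 a1).log a2.ne').deriv
  rw [hd.deriv_eq]
  have k1 := h1.self_of_nhds
  have kp := hp.self_of_nhds
  have := (((hB u u' _ _ t k1 h2).add (hB u' u _ _ t h2 k1)).div (hB u u _ _ t k1 k1) kp.ne').deriv
  refine Eq.trans this ?_
  simp only [Pi.add_apply]
  field_simp
  ring

/-- explicit formula for the Laplacian of `log B(v,v)` -/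
noncomputable def fdPhi {m : ℕ} (B : (Fin m → ℂ) →L[ℝ] (Fin m → ℂ) →L[ℝ] ℝ)
    (p q : Fin m → ℂ) : ℝ :=
  (2 * B q q + 2 * B (Complex.I • q) (Complex.I • q)) / B p p
   - (B p q + B q p) ^ 2 / (B p p) ^ 2
   - (B p (Complex.I • q) + B (Complex.I • q) p) ^ 2 / (B p p) ^ 2

lemma fd_lap {m : ℕ} (B : (Fin m → ℂ) →L[ℝ] (Fin m → ℂ) →L[ℝ] ℝ) (v : ℂ → Fin m → ℂ)
    (Y : ℝ) (hv : AnalyticOnNhd ℂ v {z | Y < z.im}) (logF : ℝ → ℝ → ℝ)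
    (hlog : ∀ x y : ℝ, Y < y → logF x y =
      Real.log (B (v (x + y * Complex.I)) (v (x + y * Complex.I))))
    (hp : ∀ z : ℂ, Y < z.im → 0 < B (v z) (v z)) (x y : ℝ) (hy : Y < y) :
    pdX (pdX logF) x y + pdY (pdY logF) x y =
      fdPhi B (v (x + y * Complex.I)) (deriv v (x + y * Complex.I)) := by
  have d1 : ∀ z : ℂ, Y < z.im → HasDerivAt v (deriv v z) z := fun z hz =>
    (hv z hz).differentiableAt.hasDerivAt
  have d2 : ∀ z : ℂ, Y < z.im → HasDerivAt (deriv v) (deriv (deriv v) z) z := fun z hz =>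
    (hv.deriv z hz).differentiableAt.hasDerivAt
  have him : ∀ x y : ℝ, ((x : ℂ) + y * Complex.I).im = y := by intro x y; simp
  have c1 : ∀ x y : ℝ, HasDerivAt (fun s : ℝ => ((s : ℂ) + y * Complex.I)) 1 x := fun x y =>
    (Complex.ofRealCLM.hasDerivAt (x := x)).add_const _ |>.congr_deriv (by simp)
  have c2 : ∀ x y : ℝ, HasDerivAt (fun s : ℝ => ((x : ℂ) + s * Complex.I)) Complex.I y := fun x y =>
    ((Complex.ofRealCLM.hasDerivAt (x := y)).mul_const Complex.I).const_add (x : ℂ)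
      |>.congr_deriv (by simp)
  have hev : ∀ᶠ s in 𝓝 y, Y < s := lt_mem_nhds hy
  have X := fd_log1 B (fun s : ℝ => v (s + y * Complex.I)) (fun s : ℝ => deriv v (s + y * Complex.I))
    (deriv (deriv v) (x + y * Complex.I)) (fun s => logF s y) x
    (Eventually.of_forall fun s => by
      simpa [Function.comp_def] using (d1 _ (by rw [him]; exact hy)).scomp s (c1 s y))
    (by simpa [Function.comp_def] using (d2 _ (by rw [him]; exact hy)).scomp x (c1 x y))
    (Eventually.of_forall fun s => hp _ (by rw [him]; exact hy))
    (Eventually.of_forall fun s => hlog _ _ hy)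
  have Yy := fd_log1 B (fun s : ℝ => v (x + s * Complex.I))
    (fun s : ℝ => Complex.I • deriv v (x + s * Complex.I))
    (Complex.I • Complex.I • deriv (deriv v) (x + y * Complex.I)) (fun s => logF x s) y
    (hev.mono fun s hs => by
      simpa [Function.comp_def] using (d1 _ (by rw [him]; exact hs)).scomp s (c2 x s))
    (by
      have := ((d2 _ (by rw [him]; exact hy)).scomp y (c2 x y)).const_smul Complex.I
      exact this)
    (hev.mono fun s hs => hp _ (by rw [him]; exact hs))
    (hev.mono fun s hs => hlog _ _ hs)
  have e1 : pdX (pdX logF) x y = deriv (deriv fun s => logF s y) x := rfl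
  have e2 : pdY (pdY logF) x y = deriv (deriv fun s => logF x s) y := rfl
  rw [e1, e2, X, Yy, smul_smul, Complex.I_mul_I, fdPhi]
  simp only [neg_smul, one_smul, map_neg, neg_apply]
  ring

lemma fdPhi_bound {m : ℕ} (B : (Fin m → ℂ) →L[ℝ] (Fin m → ℂ) →L[ℝ] ℝ) (p q : Fin m → ℂ)
    (c A : ℝ) (hc : 0 < c) (hB : c ≤ B p p) (hp : ‖p‖ ≤ A) :
    |fdPhi B p q| ≤ (4 * ‖B‖ / c + 8 * ‖B‖ ^ 2 * A ^ 2 / c ^ 2) * ‖q‖ ^ 2 := by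
  have hb : ∀ u w, |B u w| ≤ ‖B‖ * ‖u‖ * ‖w‖ := fun u w => B.le_opNorm₂ u w
  have hI : ‖Complex.I • q‖ = ‖q‖ := by rw [norm_smul]; simp
  have hA : 0 ≤ A := (norm_nonneg p).trans hp
  have sq : ∀ q' : Fin m → ℂ, ‖q'‖ = ‖q‖ →
      |(B p q' + B q' p) ^ 2 / (B p p) ^ 2| ≤ 4 * ‖B‖ ^ 2 * A ^ 2 / c ^ 2 * ‖q‖ ^ 2 := by
    intro q' hq'
    rw [abs_div, abs_pow, abs_of_pos (show 0 < (B p p) ^ 2 by have := hc.trans_le hB; positivity)]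
    have : |B p q' + B q' p| ≤ 2 * ‖B‖ * A * ‖q‖ := by
      calc _ ≤ |B p q'| + |B q' p| := abs_add_le _ _
        _ ≤ ‖B‖ * ‖p‖ * ‖q‖ + ‖B‖ * ‖q‖ * ‖p‖ := by
          have h1 := hb p q'; have h2 := hb q' p; rw [hq'] at h1 h2; exact add_le_add h1 h2
        _ = 2 * ‖B‖ * ‖p‖ * ‖q‖ := by ring
        _ ≤ _ := by gcongr
    calc _ ≤ (2 * ‖B‖ * A * ‖q‖) ^ 2 / c ^ 2 := by gcongr
      _ = _ := by ring
  have h1 : |(2 * B q q + 2 * B (Complex.I • q) (Complex.I • q)) / B p p| ≤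
      4 * ‖B‖ / c * ‖q‖ ^ 2 := by
    rw [abs_div, abs_of_pos (hc.trans_le hB)]
    have : |2 * B q q + 2 * B (Complex.I • q) (Complex.I • q)| ≤ 4 * ‖B‖ * ‖q‖ ^ 2 := by
      have h1 := hb q q
      have h2 := hb (Complex.I • q) (Complex.I • q)
      rw [hI] at h2
      rw [abs_le] at *
      constructor <;> nlinarith
    calc _ ≤ (4 * ‖B‖ * ‖q‖ ^ 2) / c := by gcongr
      _ = _ := by ring
  have h2 := sq q rfl
  have h3 := sq _ hI
  unfold fdPhi
  have h4 := add_le_add (add_le_add h1 h2) h3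
  refine le_trans ?_ (h4.trans (le_of_eq (by ring)))
  refine (abs_sub_le_add _ _).trans (add_le_add (abs_sub_le_add _ _) le_rfl)

lemma fd_q_norm (x y : ℝ) :
    ‖Complex.exp (2 * Real.pi * Complex.I * ((x : ℂ) + (y : ℂ) * Complex.I))‖ =
      Real.exp (-(2 * Real.pi * y)) := by
  rw [Complex.norm_exp]; congr 1; simp

lemma fd_q_norm' (z : ℂ) :
    ‖Complex.exp (2 * Real.pi * Complex.I * z)‖ = Real.exp (-(2 * Real.pi * z.im)) := by
  rw [Complex.norm_exp]; congr 1; simp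

lemma fd_q_lt (r y y₀ : ℝ) (hr : 0 < r) (hy₀ : y₀ = max 0 (-(Real.log r) / (2 * Real.pi)))
    (hy : y₀ < y) : Real.exp (-(2 * Real.pi * y)) < r := by
  rw [← Real.lt_log_iff_exp_lt hr]
  have h : -(Real.log r) / (2 * Real.pi) < y := by
    rw [hy₀] at hy; exact (le_max_right _ _).trans_lt hy
  rw [div_lt_iff₀ (by positivity)] at h
  linarith

/-- the shifted, locally normalised period vector -/
noncomputable def fdV {m : ℕ} (M : Matrix (Fin m) (Fin m) ℂ) (a : ℂ → Fin m → ℂ) (x₁ : ℝ) (z : ℂ) :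
    Fin m → ℂ :=
  (fdE M (z - x₁)).mulVec (a (Complex.exp (2 * Real.pi * Complex.I * z)))

lemma fdE_mulVec {m : ℕ} (M : Matrix (Fin m) (Fin m) ℂ) (z : ℂ) (u : Fin m → ℂ) :
    (fdE M z).mulVec u = ∑ k ∈ Finset.range (m + 1), (z ^ k / (Nat.factorial k : ℂ)) •
      (LinearMap.toContinuousLinearMap (Matrix.mulVecLin (M ^ k))) u := by
  rw [fdE, Matrix.sum_mulVec]
  refine Finset.sum_congr rfl fun k _ => ?_
  simp [Matrix.smul_mulVec]

lemma fdE_fix {m : ℕ} (M : Matrix (Fin m) (Fin m) ℂ) (z : ℂ) (u : Fin m → ℂ)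
    (hu : M.mulVec u = 0) : (fdE M z).mulVec u = u := by
  rw [fdE, Matrix.sum_mulVec, Finset.sum_eq_single 0]
  · simp
  · intro k _ hk
    obtain ⟨j, rfl⟩ := Nat.exists_eq_succ_of_ne_zero hk
    rw [Matrix.smul_mulVec, pow_succ M, ← Matrix.mulVec_mulVec, hu]; simp
  · simp

lemma fdV_analytic {m : ℕ} (M : Matrix (Fin m) (Fin m) ℂ) (a : ℂ → Fin m → ℂ) (x₁ : ℝ)
    (r y₀ : ℝ) (hr : 0 < r) (ha : AnalyticOnNhd ℂ a (Metric.ball 0 r))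
    (hy₀ : y₀ = max 0 (-(Real.log r) / (2 * Real.pi))) :
    AnalyticOnNhd ℂ (fdV M a x₁) {z | y₀ < z.im} := by
  intro z hz
  have hq : AnalyticAt ℂ (fun z : ℂ => Complex.exp (2 * Real.pi * Complex.I * z)) z := by fun_prop
  have haq : AnalyticAt ℂ (fun z : ℂ => a (Complex.exp (2 * Real.pi * Complex.I * z))) z := by
    refine AnalyticAt.fun_comp (ha _ ?_) hq
    rw [mem_ball_zero_iff, fd_q_norm']
    exact fd_q_lt r _ y₀ hr hy₀ hz
  have : fdV M a x₁ = fun z : ℂ => ∑ k ∈ Finset.range (m + 1),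
      ((z - x₁) ^ k / (Nat.factorial k : ℂ)) •
      (LinearMap.toContinuousLinearMap (Matrix.mulVecLin (M ^ k)))
        (a (Complex.exp (2 * Real.pi * Complex.I * z))) := by
    funext z; exact fdE_mulVec _ _ _
  rw [this]
  refine Finset.analyticAt_fun_sum _ fun k _ => ?_
  refine AnalyticAt.fun_smul (by fun_prop) ?_
  exact (ContinuousLinearMap.analyticAt _ _).fun_comp haq

lemma fd_norm_iy (k : ℕ) (y : ℝ) (hy : 0 ≤ y) :
    ‖((y : ℂ) * Complex.I) ^ k / (Nat.factorial k : ℂ)‖ ≤ Real.exp y := by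
  have := Real.pow_div_factorial_le_exp y hy k
  simpa [abs_of_nonneg hy] using this

lemma fd_norm_iy' (k : ℕ) (y : ℝ) (hy : 0 ≤ y) :
    ‖((k : ℂ) * ((y : ℂ) * Complex.I) ^ (k - 1)) / (Nat.factorial k : ℂ)‖ ≤ Real.exp y := by
  rcases k with _ | k
  · simp [Real.exp_nonneg]
  · have h := fd_norm_iy k y hy
    convert h using 2
    rw [Nat.factorial_succ, Nat.add_sub_cancel]
    have : ((k : ℂ) + 1) ≠ 0 := Nat.cast_add_one_ne_zero k
    push_cast
    rw [mul_div_mul_left _ _ this]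

lemma fd_est {m : ℕ} (M : Matrix (Fin m) (Fin m) ℂ) (a : ℂ → Fin m → ℂ)
    (r y₀ : ℝ) (hr : 0 < r) (ha : AnalyticOnNhd ℂ a (Metric.ball 0 r))
    (hy₀ : y₀ = max 0 (-(Real.log r) / (2 * Real.pi))) (hM : M.mulVec (a 0) = 0) :
    ∃ Y₁, y₀ < Y₁ ∧ ∃ K, 0 < K ∧ ∀ x y : ℝ, Y₁ < y →
      ‖fdV M a x (x + y * Complex.I) - a 0‖ ≤ K * Real.exp (-(Real.pi * y)) ∧
      ‖deriv (fdV M a x) (x + y * Complex.I)‖ ≤ K * Real.exp (-(Real.pi * y)) := by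
  have h0 : (0 : ℂ) ∈ Metric.ball (0 : ℂ) r := by simpa using hr
  obtain ⟨L₁, hL₁⟩ := ((ha 0 h0).differentiableAt.isBigO_sub).bound
  have hcd := ((ha.deriv 0 h0).continuousAt).norm.eventually_lt_const (lt_add_one ‖deriv a 0‖)
  obtain ⟨ρ, hρ, hρ'⟩ := Metric.eventually_nhds_iff.1 (hL₁.and hcd)
  set L := max L₁ (‖deriv a 0‖ + 1) with hL
  have hLpos : 0 < L := lt_of_lt_of_le (by positivity) (le_max_right _ _)
  let T : ℕ → (Fin m → ℂ) →L[ℂ] (Fin m → ℂ) := fun k =>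
    LinearMap.toContinuousLinearMap (Matrix.mulVecLin (M ^ k))
  set S := ∑ k ∈ Finset.range (m + 1), ‖T k‖ with hS
  have hSn : 0 ≤ S := Finset.sum_nonneg fun _ _ => norm_nonneg _
  have hpi : 3 < Real.pi := Real.pi_gt_three
  have hy₀n : 0 ≤ y₀ := hy₀ ▸ le_max_left _ _
  refine ⟨max y₀ (max 0 (-(Real.log ρ) / (2 * Real.pi))) + 1,
    lt_of_le_of_lt (le_max_left _ _) (lt_add_one _), (1 + 2 * Real.pi) * (S * L) + 1, by positivity, ?_⟩
  intro x y hy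
  have hy1 : y₀ < y := ((le_max_left _ _).trans_lt (lt_add_one _)).trans hy
  have hy2 : max 0 (-(Real.log ρ) / (2 * Real.pi)) < y :=
    ((le_max_right _ _).trans_lt (lt_add_one _)).trans hy
  have hy0 : 0 ≤ y := (hy₀n.trans_lt hy1).le
  set z : ℂ := x + y * Complex.I with hz
  have hzx : z - x = y * Complex.I := by rw [hz]; ring
  set q := Complex.exp (2 * Real.pi * Complex.I * z) with hq
  have hqn : ‖q‖ = Real.exp (-(2 * Real.pi * y)) := fd_q_norm x y
  have hqρ : dist q 0 < ρ := by
    rw [dist_zero_right, hqn]; exact fd_q_lt ρ y _ hρ rfl hy2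
  have hqr : q ∈ Metric.ball (0 : ℂ) r := by
    rw [mem_ball_zero_iff, hqn]; exact fd_q_lt r y _ hr hy₀ hy1
  obtain ⟨b1, b2⟩ := hρ' hqρ
  rw [sub_zero] at b1
  have b1' : ‖a q - a 0‖ ≤ L * ‖q‖ := b1.trans (by gcongr; exact le_max_left _ _)
  have b2' : ‖deriv a q‖ ≤ L := b2.le.trans (le_max_right _ _)
  have hexp : Real.exp y * ‖q‖ ≤ Real.exp (-(Real.pi * y)) := by
    rw [hqn, ← Real.exp_add]; apply Real.exp_le_exp.2; nlinarith
  have hV : ∀ w, fdV M a x w = a 0 + ∑ k ∈ Finset.range (m + 1),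
      ((w - x) ^ k / (Nat.factorial k : ℂ)) •
      T k (a (Complex.exp (2 * Real.pi * Complex.I * w)) - a 0) := by
    intro w
    rw [← fdE_mulVec, Matrix.mulVec_sub, fdE_fix M _ _ hM, fdV]; abel
  constructor
  · rw [hV, add_sub_cancel_left]
    calc _ ≤ ∑ k ∈ Finset.range (m + 1), Real.exp y * (‖T k‖ * (L * ‖q‖)) := by
          refine norm_sum_le_of_le _ fun k _ => ?_
          rw [norm_smul, hzx]
          exact mul_le_mul (fd_norm_iy k y hy0) (((T k).le_opNorm _).trans (by gcongr))
            (norm_nonneg _) (Real.exp_nonneg _)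
      _ = S * L * (Real.exp y * ‖q‖) := by
          rw [hS, ← Finset.mul_sum, ← Finset.sum_mul]; ring
      _ ≤ S * L * Real.exp (-(Real.pi * y)) := by gcongr
      _ ≤ _ := by
          gcongr
          nlinarith [mul_nonneg hSn hLpos.le]
  · have hqd : HasDerivAt (fun w : ℂ => Complex.exp (2 * Real.pi * Complex.I * w))
        (q * (2 * Real.pi * Complex.I)) z := by
      have := ((hasDerivAt_id z).const_mul (2 * Real.pi * Complex.I : ℂ)).cexp
      simpa using this
    have had : HasDerivAt (fun w : ℂ => a (Complex.exp (2 * Real.pi * Complex.I * w)) - a 0)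
        ((q * (2 * Real.pi * Complex.I)) • deriv a q) z :=
      ((ha q hqr).differentiableAt.hasDerivAt.scomp z hqd).sub_const _
    have hpd : ∀ k : ℕ, HasDerivAt (fun w : ℂ => (w - x) ^ k / (Nat.factorial k : ℂ))
        ((k * ((y : ℂ) * Complex.I) ^ (k - 1)) / (Nat.factorial k : ℂ)) z := by
      intro k
      have := (((hasDerivAt_id z).sub_const (x : ℂ)).pow k).div_const (Nat.factorial k : ℂ)
      simpa [hzx] using this
    have hTd : ∀ k : ℕ, HasDerivAt (fun w : ℂ => T k (a (Complex.exp (2 * Real.pi * Complex.I * w)) - a 0))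
        (T k ((q * (2 * Real.pi * Complex.I)) • deriv a q)) z := fun k =>
      (T k).hasFDerivAt.comp_hasDerivAt z had
    have hall := (HasDerivAt.fun_sum (u := Finset.range (m + 1)) fun k _ =>
      (hpd k).smul (hTd k)).const_add (a 0)
    have hder := (congrArg (fun f => deriv f z) (funext hV)).trans hall.deriv
    rw [hder]
    have hn2 : ‖(q * (2 * Real.pi * Complex.I)) • deriv a q‖ ≤ 2 * Real.pi * (L * ‖q‖) := by
      rw [norm_smul, norm_mul]
      have : ‖(2 * Real.pi * Complex.I : ℂ)‖ = 2 * Real.pi := by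
        simp [abs_of_pos Real.pi_pos]
      rw [this]
      calc _ ≤ ‖q‖ * (2 * Real.pi) * L := by gcongr
        _ = _ := by ring
    calc _ ≤ ∑ k ∈ Finset.range (m + 1), (Real.exp y * (‖T k‖ * (2 * Real.pi * (L * ‖q‖))) +
            Real.exp y * (‖T k‖ * (L * ‖q‖))) := by
          refine norm_sum_le_of_le _ fun k _ => ?_
          refine norm_add_le_of_le ?_ ?_
          · rw [norm_smul, hzx]
            exact mul_le_mul (fd_norm_iy k y hy0) (((T k).le_opNorm _).trans (by gcongr))
              (norm_nonneg _) (Real.exp_nonneg _)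
          · rw [norm_smul]
            exact mul_le_mul (fd_norm_iy' k y hy0) (((T k).le_opNorm _).trans (by gcongr))
              (norm_nonneg _) (Real.exp_nonneg _)
      _ = (1 + 2 * Real.pi) * (S * L) * (Real.exp y * ‖q‖) := by
          rw [Finset.sum_add_distrib, hS, ← Finset.mul_sum, ← Finset.mul_sum, ← Finset.sum_mul,
            ← Finset.sum_mul]; ring
      _ ≤ (1 + 2 * Real.pi) * (S * L) * Real.exp (-(Real.pi * y)) := by gcongr
      _ ≤ _ := by
          gcongr
          linarith

end Helpers

/-- in the setting of the period pairing `F`, if `Qᵀ = (-1)ⁿ·Q`, `N·a₀ = 0`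
and `Q̃(a₀, conj a₀)` is real and positive, then `F` is real-valued and eventually positive,
`|Δ log F| ≤ C·e^{-π y}` for `y ≥ Y`, and every vertical ray has finite length with respect
to the density `|Δ log F|`. -/
theorem finite_distance_of_degree_zero
    (n m : ℕ) (hn : 1 ≤ n) (hm : 1 ≤ m)
    (N Q : Matrix (Fin m) (Fin m) ℝ)
    (hNnil : IsNilpotent N)
    (hQN : N.transpose * Q + Q * N = 0)
    (hQsym : Q.transpose = (-1 : ℝ) ^ n • Q)
    (r : ℝ) (hr : 0 < r)
    (a : ℂ → (Fin m → ℂ))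
    (ha : AnalyticOnNhd ℂ a (Metric.ball 0 r))
    (ha0 : a 0 ≠ 0)
    (Nc : Matrix (Fin m) (Fin m) ℂ) (hNc : Nc = N.map Complex.ofReal)
    (Qc : (Fin m → ℂ) → (Fin m → ℂ) → ℂ)
    (hQc : ∀ u v, Qc u v = ∑ j, ∑ k, u j * (Q j k : ℂ) * v k)
    (Qt : (Fin m → ℂ) → (Fin m → ℂ) → ℂ)
    (hQt : ∀ u v, Qt u v = Complex.I ^ n * Qc u v)
    (hNa0 : Nc.mulVec (a 0) = 0)
    (y₀ : ℝ) (hy₀ : y₀ = max 0 (-(Real.log r) / (2 * Real.pi)))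
    (Expz : ℂ → Matrix (Fin m) (Fin m) ℂ)
    (hExpz : ∀ z : ℂ, Expz z =
      ∑ k ∈ Finset.range (m + 1), (z ^ k / (Nat.factorial k : ℂ)) • Nc ^ k)
    (F : ℝ → ℝ → ℂ)
    (hF : ∀ x y : ℝ, F x y =
      Qt ((Expz ((x : ℂ) + (y : ℂ) * Complex.I)).mulVec
            (a (Complex.exp (2 * Real.pi * Complex.I * ((x : ℂ) + (y : ℂ) * Complex.I)))))
         (star ((Expz ((x : ℂ) + (y : ℂ) * Complex.I)).mulVec
            (a (Complex.exp (2 * Real.pi * Complex.I * ((x : ℂ) + (y : ℂ) * Complex.I)))))))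
    (hpos : ∃ c : ℝ, 0 < c ∧ Qt (a 0) (star (a 0)) = (c : ℂ))
    (logF : ℝ → ℝ → ℝ)
    (hlogF : ∀ x y : ℝ, logF x y = Real.log ((F x y).re)) :
    (∀ x y : ℝ, y₀ < y → (F x y).im = 0) ∧
    ∃ Y : ℝ, y₀ < Y ∧ ∃ C : ℝ, 0 < C ∧
      (∀ x y : ℝ, Y ≤ y → 0 < (F x y).re) ∧
      (∀ x y : ℝ, Y ≤ y →
        |pdX (pdX logF) x y + pdY (pdY logF) x y| ≤ C * Real.exp (-Real.pi * y)) ∧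
      (∀ x₀ : ℝ, IntegrableOn
          (fun s : ℝ => Real.sqrt
            |pdX (pdX logF) x₀ (Y + s) + pdY (pdY logF) x₀ (Y + s)|)
          (Set.Ici 0)) := by
  subst hNc
  set M := N.map Complex.ofReal with hMdef
  have hM : M ^ m = 0 := by
    have h := (Matrix.map_pow N Complex.ofRealHom m).symm
    rw [fd_pow_eq_zero N hNnil] at h
    refine Eq.trans h ?_
    ext i j; simp
  have hE : Expz = fdE M := funext hExpz
  subst hE
  -- the pairing in explicit form
  have hFw : ∀ x₁ x y : ℝ, F x y = Complex.I ^ n * ∑ j, ∑ k,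
      (fdV M a x₁ (x + y * Complex.I)) j * (Q j k : ℂ) *
        (star (fdV M a x₁ (x + y * Complex.I))) k := by
    intro x₁ x y
    rw [hF, hQt, hQc, ← fd_shift N Q hNnil hQN x₁ (fdV M a x₁ (x + y * Complex.I))]
    have : (fdE M x₁).mulVec (fdV M a x₁ (x + y * Complex.I)) =
        (fdE M ((x : ℂ) + (y : ℂ) * Complex.I)).mulVec
          (a (Complex.exp (2 * Real.pi * Complex.I * ((x : ℂ) + (y : ℂ) * Complex.I)))) := by
      rw [fdV, Matrix.mulVec_mulVec, ← fdE_add M hM, add_sub_cancel]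
    rw [← hMdef, this]
  have hFB : ∀ x₁ x y : ℝ, (F x y).re =
      fdB n Q (fdV M a x₁ (x + y * Complex.I)) (fdV M a x₁ (x + y * Complex.I)) := by
    intro x₁ x y
    rw [hFw x₁ x y, fdB_apply]
  refine ⟨fun x y _ => by rw [hFw 0 x y]; exact fd_real Q hQsym _, ?_⟩
  set B := fdB n Q with hB
  obtain ⟨c, hc, hc'⟩ := hpos
  have hBc : B (a 0) (a 0) = c := by
    rw [hB, fdB_apply, ← hQc, ← hQt, hc', Complex.ofReal_re]
  obtain ⟨Y₁, hY₁, K, hK, hest⟩ := fd_est M a r y₀ hr ha hy₀ hNa0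
  have hcont : Continuous fun p : Fin m → ℂ => B p p :=
    B.continuous.clm_apply continuous_id
  have hnear : ∀ᶠ p in nhds (a 0), c / 2 < B p p :=
    hcont.continuousAt.eventually_const_lt (show c / 2 < B (a 0) (a 0) by rw [hBc]; linarith)
  obtain ⟨δ, hδ, hδ'⟩ := Metric.eventually_nhds_iff.1 hnear
  have htend : Filter.Tendsto (fun y : ℝ => K * Real.exp (-(Real.pi * y))) Filter.atTop (nhds 0) := by
    have h := (Real.tendsto_exp_neg_atTop_nhds_zero.comp
      (Filter.tendsto_id.const_mul_atTop Real.pi_pos)).const_mul K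
    simpa [Function.comp_def] using h
  obtain ⟨Y₂, hY₂⟩ := Filter.eventually_atTop.1 (htend.eventually_lt_const hδ)
  set Y₃ := max Y₁ Y₂ with hY₃
  have hy₀n : 0 ≤ y₀ := hy₀ ▸ le_max_left _ _
  have hY₃0 : y₀ < Y₃ := hY₁.trans_le (le_max_left _ _)
  have hclose : ∀ x y : ℝ, Y₃ < y → ‖fdV M a x (x + y * Complex.I) - a 0‖ < δ := by
    intro x y hy
    exact ((hest x y ((le_max_left _ _).trans_lt hy)).1).trans_lt
      (hY₂ y ((le_max_right _ _).trans hy.le))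
  have hlow : ∀ x y : ℝ, Y₃ < y → c / 2 < (F x y).re := by
    intro x y hy
    rw [hFB x x y]
    exact hδ' (by rw [dist_eq_norm]; exact hclose x y hy)
  have hposv : ∀ (x₁ : ℝ) (z : ℂ), Y₃ < z.im → 0 < B (fdV M a x₁ z) (fdV M a x₁ z) := by
    intro x₁ z hz
    have h := hlow z.re z.im hz
    rw [hFB x₁, Complex.re_add_im] at h
    linarith
  have han : ∀ x₁ : ℝ, AnalyticOnNhd ℂ (fdV M a x₁) {z | Y₃ < z.im} := fun x₁ =>
    (fdV_analytic M a x₁ r y₀ hr ha hy₀).mono fun z hz => hY₃0.trans hz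
  have hlap : ∀ x₁ x y : ℝ, Y₃ < y → pdX (pdX logF) x y + pdY (pdY logF) x y =
      fdPhi B (fdV M a x₁ (x + y * Complex.I)) (deriv (fdV M a x₁) (x + y * Complex.I)) := by
    intro x₁ x y hy
    refine fd_lap B (fdV M a x₁) Y₃ (han x₁) logF ?_ (hposv x₁) x y hy
    intro x y _
    rw [hlogF, hFB x₁]
  set D := 4 * ‖B‖ / (c / 2) + 8 * ‖B‖ ^ 2 * (‖a 0‖ + δ) ^ 2 / (c / 2) ^ 2 with hD
  have hDn : 0 ≤ D := by positivity
  have hbound : ∀ x y : ℝ, Y₃ < y → |pdX (pdX logF) x y + pdY (pdY logF) x y| ≤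
      (D * K ^ 2 + 1) * Real.exp (-Real.pi * y) := by
    intro x y hy
    have hy0 : 0 ≤ y := (hy₀n.trans_lt (hY₃0.trans hy)).le
    rw [hlap x x y hy]
    have h1 : ‖fdV M a x (x + y * Complex.I)‖ ≤ ‖a 0‖ + δ := by
      have h2 := hclose x y hy
      have h3 := norm_add_le (fdV M a x (x + y * Complex.I) - a 0) (a 0)
      rw [sub_add_cancel] at h3
      linarith
    have h2 := (hest x y ((le_max_left _ _).trans_lt hy)).2
    have h3 : c / 2 ≤ B (fdV M a x (x + y * Complex.I)) (fdV M a x (x + y * Complex.I)) := by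
      rw [← hFB x x y]; exact (hlow x y hy).le
    refine (fdPhi_bound B _ (deriv (fdV M a x) (x + y * Complex.I)) _ _ (by linarith) h3 h1).trans ?_
    have he : Real.exp (-(Real.pi * y)) ^ 2 ≤ Real.exp (-Real.pi * y) := by
      rw [← Real.exp_nat_mul]
      apply Real.exp_le_exp.2
      push_cast
      nlinarith [mul_nonneg Real.pi_pos.le hy0]
    calc _ ≤ D * (K * Real.exp (-(Real.pi * y))) ^ 2 := by gcongr
      _ = D * K ^ 2 * Real.exp (-(Real.pi * y)) ^ 2 := by ring
      _ ≤ D * K ^ 2 * Real.exp (-Real.pi * y) := by gcongr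
      _ ≤ _ := by gcongr; linarith
  refine ⟨Y₃ + 1, by linarith, D * K ^ 2 + 1, by positivity, ?_, ?_, ?_⟩
  · intro x y hy
    have := hlow x y (by linarith)
    linarith
  · intro x y hy
    exact hbound x y (by linarith)
  · intro x₀
    set Cc := D * K ^ 2 + 1 with hCc
    have hCn : 0 ≤ Cc := by positivity
    have hdom : IntegrableOn (fun s : ℝ => Real.sqrt Cc * Real.exp (-(Real.pi / 2) * s))
        (Set.Ici 0) := by
      rw [integrableOn_Ici_iff_integrableOn_Ioi]
      exact (exp_neg_integrableOn_Ioi 0 (by positivity)).const_mul _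
    refine Integrable.mono' hdom ?_ ?_
    · have hco : ContinuousOn (fun s : ℝ => Real.sqrt |fdPhi B
          (fdV M a x₀ (x₀ + ((Y₃ + 1 + s : ℝ) : ℂ) * Complex.I))
          (deriv (fdV M a x₀) (x₀ + ((Y₃ + 1 + s : ℝ) : ℂ) * Complex.I))|) (Set.Ici 0) := by
        have hz : ContinuousOn (fun s : ℝ => (x₀ : ℂ) + ((Y₃ + 1 + s : ℝ) : ℂ) * Complex.I)
            (Set.Ici 0) := by fun_prop
        have hmaps : Set.MapsTo (fun s : ℝ => (x₀ : ℂ) + ((Y₃ + 1 + s : ℝ) : ℂ) * Complex.I)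
            (Set.Ici 0) {z | Y₃ < z.im} := by
          intro s hs
          have : (0 : ℝ) ≤ s := hs
          have h2 : ((x₀ : ℂ) + ((Y₃ + 1 + s : ℝ) : ℂ) * Complex.I).im = Y₃ + 1 + s := by simp
          rw [Set.mem_ofPred_eq, h2]
          linarith
        have hv := (han x₀).continuousOn.comp hz hmaps
        have hv' := (han x₀).deriv.continuousOn.comp hz hmaps
        simp only [Function.comp_def] at hv hv'
        have hne : ∀ s ∈ Set.Ici (0 : ℝ), B
          (fdV M a x₀ (x₀ + ((Y₃ + 1 + s : ℝ) : ℂ) * Complex.I))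
          (fdV M a x₀ (x₀ + ((Y₃ + 1 + s : ℝ) : ℂ) * Complex.I)) ≠ 0 := fun s hs =>
          (hposv x₀ _ (hmaps hs)).ne'
        have hBB : ∀ f g : ℝ → Fin m → ℂ, ContinuousOn f (Set.Ici 0) → ContinuousOn g (Set.Ici 0) →
            ContinuousOn (fun s => B (f s) (g s)) (Set.Ici 0) := fun f g hf hg =>
          (B.continuous.comp_continuousOn hf).clm_apply hg
        have hIv' := hv'.const_smul Complex.I
        refine (ContinuousOn.abs ?_).sqrt
        unfold fdPhi
        refine ContinuousOn.sub (ContinuousOn.sub (ContinuousOn.div ?_ (hBB _ _ hv hv) hne)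
          (ContinuousOn.div ?_ ((hBB _ _ hv hv).pow 2) fun s hs => pow_ne_zero 2 (hne s hs)))
          (ContinuousOn.div ?_ ((hBB _ _ hv hv).pow 2) fun s hs => pow_ne_zero 2 (hne s hs))
        · exact ((hBB _ _ hv' hv').const_mul 2).add ((hBB _ _ hIv' hIv').const_mul 2)
        · exact ((hBB _ _ hv hv').add (hBB _ _ hv' hv)).pow 2
        · exact ((hBB _ _ hv hIv').add (hBB _ _ hIv' hv)).pow 2
      refine (hco.congr ?_).aestronglyMeasurable measurableSet_Ici
      intro s hs
      have : (0 : ℝ) ≤ s := hs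
      simp only
      rw [hlap x₀ x₀ (Y₃ + 1 + s) (by linarith)]
    · refine (ae_restrict_iff' measurableSet_Ici).2 (Filter.Eventually.of_forall fun s hs => ?_)
      have hs0 : (0 : ℝ) ≤ s := hs
      rw [Real.norm_of_nonneg (Real.sqrt_nonneg _)]
      have hb := hbound x₀ (Y₃ + 1 + s) (by linarith)
      refine Real.sqrt_le_iff.2 ⟨by positivity, hb.trans ?_⟩
      rw [mul_pow, Real.sq_sqrt hCn, ← Real.exp_nat_mul]
      refine mul_le_mul_of_nonneg_left (Real.exp_le_exp.2 ?_) hCn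
      push_cast
      nlinarith [mul_nonneg Real.pi_pos.le (show 0 ≤ Y₃ + 1 by linarith)]
end
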